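/- Let a = (a_n)_{n≥1} be a non-ultimately periodic sequence over F_q[T] with deg a_n ≥ 1 for all n ≥ 1, set ξ := [0, a_1, a_2, …] ∈ F_q((T^{-1})) with convergents (p_n/q_n), and assume the sequence (|q_n|^{1/n})_{n≥1} is bounded. Put m := liminf_{n→∞} |q_n|^{1/n} and M := limsup_{n→∞} |q_n|^{1/n}. Then w_2(ξ) ≥ w_2*(ξ) ≥ max(2, (log m/log M)·Dio(a) − 1); in particular, if (|q_n|^{1/n})_{n≥1} converges, then w_2(ξ) ≥ w_2*(ξ) ≥ max(2, Dio(a) − 1). Furthermore, if in addition the sequence (|a_n|)_{n≥1} is bounded, then w_2(ξ) ≥ max(2, (log m/log M)·(Dio(a)+1) − 1); in particular, if (|q_n|^{1/n})_{n≥1} converges, then w_2(ξ) ≥ max(2, Dio(a)). -/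

import Mathlib

open Polynomial Filter
open scoped ENNReal

noncomputable section

namespace Ooto

variable (Fq : Type) [Field Fq] [Fintype Fq]

/-- `F_q((T⁻¹))`, realized as formal Laurent series in the variable `X = T⁻¹`. -/
abbrev K := LaurentSeries Fq

/-- The element `T = X⁻¹` of `F_q((T⁻¹))`. -/
def TT : K Fq := HahnSeries.single (-1 : ℤ) (1 : Fq)

/-- The natural embedding of `F_q[T]` into `F_q((T⁻¹))`, sending `T` to `T`. -/
def polyToK : Polynomial Fq →+* K Fq := Polynomial.eval₂RingHom HahnSeries.C (TT Fq)

open Classical in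
/-- The absolute value on `F_q((T⁻¹))`: `|0| = 0` and `|ξ| = q^{-N}` where `N` is the order
of `ξ` as a series in `T⁻¹`. -/
def kabs (f : K Fq) : ℝ := if f = 0 then 0 else (Fintype.card Fq : ℝ) ^ (-f.order)

/-- A fixed algebraic closure of `F_q((T⁻¹))`. -/
abbrev L := AlgebraicClosure (K Fq)

def toL : K Fq →+* L Fq := algebraMap (K Fq) (L Fq)

def φ : Polynomial Fq →+* L Fq := (toL Fq).comp (polyToK Fq)

/-- Evaluation of `P ∈ (F_q[T])[X]` at `ξ ∈ F_q((T⁻¹))`. -/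
def evalK (P : Polynomial (Polynomial Fq)) (ξ : K Fq) : K Fq :=
  Polynomial.eval₂ (polyToK Fq) ξ P

/-- Evaluation of `P ∈ (F_q[T])[X]` at a point of the algebraic closure. -/
def evalL (P : Polynomial (Polynomial Fq)) (α : L Fq) : L Fq :=
  Polynomial.eval₂ (φ Fq) α P

/-- Height of a polynomial over `F_q[T]`: the maximum of the absolute values of its
coefficients. -/
def Hpoly (P : Polynomial (Polynomial Fq)) : ℝ := ⨆ i : ℕ, kabs Fq (polyToK Fq (P.coeff i))

/-- `P` is the minimal polynomial of `α`: a non-constant irreducible primitive polynomial in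
`(F_q[T])[X]` whose leading coefficient is monic in `T`, vanishing at `α`. -/
def IsMinPolyOf (P : Polynomial (Polynomial Fq)) (α : L Fq) : Prop :=
  0 < P.natDegree ∧ Irreducible P ∧ P.IsPrimitive ∧ (P.leadingCoeff).Monic ∧ evalL Fq P α = 0

/-- `α` is algebraic over `F_q(T)`. -/
def IsAlgElem (α : L Fq) : Prop := ∃ P, IsMinPolyOf Fq P α

open Classical in
/-- The minimal polynomial of an algebraic element (junk value `0` otherwise). -/
def minPolyPrim (α : L Fq) : Polynomial (Polynomial Fq) :=
  if h : IsAlgElem Fq α then h.choose else 0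

/-- Degree of an algebraic element. -/
def degAlg (α : L Fq) : ℕ := (minPolyPrim Fq α).natDegree

/-- Height of an algebraic element. -/
def heightAlg (α : L Fq) : ℝ := Hpoly Fq (minPolyPrim Fq α)

/-- Inseparable degree of a polynomial `P ∈ (F_q[T])[X]`: the largest power `f = p^j` of the
characteristic such that `P(X) = R(X^f)` for some `R`. -/
def insepDeg (P : Polynomial (Polynomial Fq)) : ℕ :=
  (ringChar Fq) ^ sSup {j : ℕ | ∃ R : Polynomial (Polynomial Fq),
    P = R.comp (Polynomial.X ^ (ringChar Fq) ^ j)}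

/-- Inseparable degree of an algebraic element. -/
def insepAlg (α : L Fq) : ℕ := insepDeg Fq (minPolyPrim Fq α)

/-- `α'` is the Galois conjugate of the quadratic element `α` (equal to `α` itself in the
inseparable case): the minimal polynomial of `α` factors as `A(X - α)(X - α')`. -/
def IsConjOf (α' α : L Fq) : Prop :=
  (minPolyPrim Fq α).natDegree = 2 ∧
  (minPolyPrim Fq α).map (φ Fq) =
    Polynomial.C (φ Fq (minPolyPrim Fq α).leadingCoeff) *
      (Polynomial.X - Polynomial.C α) * (Polynomial.X - Polynomial.C α')

/-- `v` is an absolute value on the algebraic closure of `F_q((T⁻¹))` extending `kabs`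
(such an extension exists and is unique). -/
structure IsAbsExt (v : L Fq → ℝ) : Prop where
  eq_zero_iff : ∀ x, v x = 0 ↔ x = 0
  map_mul : ∀ x y, v (x * y) = v x * v y
  add_le : ∀ x y, v (x + y) ≤ max (v x) (v y)
  nonneg : ∀ x, 0 ≤ v x
  extends_kabs : ∀ f : K Fq, v (toL Fq f) = kabs Fq f

/-- The exponent `w_n(ξ)`: the supremum of the real numbers `w` such that
`0 < |P(ξ)| ≤ H(P)^{-w}` for infinitely many `P ∈ (F_q[T])[X]` of degree at most `n`. -/
def wExp (n : ℕ) (ξ : K Fq) : EReal :=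
  sSup {x : EReal | ∃ w : ℝ, x = (w : EReal) ∧
    {P : Polynomial (Polynomial Fq) | P.natDegree ≤ n ∧ 0 < kabs Fq (evalK Fq P ξ) ∧
      kabs Fq (evalK Fq P ξ) ≤ Hpoly Fq P ^ (-w)}.Infinite}

/-- The exponent `w_n^*(ξ)`: the supremum of the real numbers `w` such that
`0 < |ξ - α| ≤ H(α)^{-w-1}` for infinitely many algebraic `α` of degree at most `n`. -/
def wStarExp (v : L Fq → ℝ) (n : ℕ) (ξ : K Fq) : EReal :=
  sSup {x : EReal | ∃ w : ℝ, x = (w : EReal) ∧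
    {α : L Fq | IsAlgElem Fq α ∧ degAlg Fq α ≤ n ∧ 0 < v (toL Fq ξ - α) ∧
      v (toL Fq ξ - α) ≤ heightAlg Fq α ^ (-w - 1)}.Infinite}

/-- `pSeq a n = p_{n-1}`, the numerators of the convergents of `[a 0; a 1, a 2, …]`
(with `p_{-1} = 1`). -/
def pSeq (a : ℕ → Polynomial Fq) : ℕ → Polynomial Fq
  | 0 => 1
  | 1 => a 0
  | (n+2) => a (n+1) * pSeq a (n+1) + pSeq a n

/-- `qSeq a n = q_{n-1}`, the denominators of the convergents of `[a 0; a 1, a 2, …]`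
(with `q_{-1} = 0`). -/
def qSeq (a : ℕ → Polynomial Fq) : ℕ → Polynomial Fq
  | 0 => 0
  | 1 => 1
  | (n+2) => a (n+1) * qSeq a (n+1) + qSeq a n

/-- `ξ` has continued fraction expansion `[a 0; a 1, a 2, …]`: each partial quotient `a n`
(`n ≥ 1`) has degree at least one and `|ξ - p_n/q_n| = |q_n|⁻¹|q_{n+1}|⁻¹` for all `n ≥ 0`. -/
def IsCFOf (ξ : K Fq) (a : ℕ → Polynomial Fq) : Prop :=
  (∀ n, 1 ≤ n → 1 ≤ (a n).natDegree) ∧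
  ∀ n : ℕ,
    kabs Fq (ξ - polyToK Fq (pSeq Fq a (n+1)) / polyToK Fq (qSeq Fq a (n+1))) =
      (kabs Fq (polyToK Fq (qSeq Fq a (n+1))) * kabs Fq (polyToK Fq (qSeq Fq a (n+2))))⁻¹

/-- The sequence of partial quotients of `[0; b 0, b 1, b 2, …]`. -/
def cfA (b : ℕ → Polynomial Fq) : ℕ → Polynomial Fq := fun n => if n = 0 then 0 else b (n - 1)

/-- `qden b n` is the denominator `q_n` of the `n`-th convergent of `[0; b 0, b 1, …]`. -/
def qden (b : ℕ → Polynomial Fq) (n : ℕ) : Polynomial Fq := qSeq Fq (cfA Fq b) (n + 1)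

/-- `V^w` for a finite word `V` and a real `w ≥ 0`: `⌊w⌋` copies of `V` followed by the prefix
of `V` of length `⌈(w - ⌊w⌋)|V|⌉`. -/
def wordPow {A : Type*} (V : List A) (w : ℝ) : List A :=
  (List.replicate ⌊w⌋₊ V).flatten ++ V.take ⌈(w - ⌊w⌋₊) * V.length⌉₊

/-- The finite word `l` is a prefix of the infinite word `b`. -/
def IsPrefixOfSeq {A : Type*} (l : List A) (b : ℕ → A) : Prop :=
  ∀ (i : ℕ) (h : i < l.length), l.get ⟨i, h⟩ = b i

/-- Condition `(*)_ρ` for an infinite word. -/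
def SatisfiesCond {A : Type*} (b : ℕ → A) (ρ : ℝ) : Prop :=
  ∃ (U V : ℕ → List A) (w : ℕ → ℝ),
    (∀ n, V n ≠ []) ∧ (∀ n, 0 ≤ w n) ∧
    (∀ n, IsPrefixOfSeq (U n ++ wordPow (V n) (w n)) b) ∧
    (∀ n, ρ * (((U n).length + (V n).length : ℕ) : ℝ) ≤
      (((U n).length + (wordPow (V n) (w n)).length : ℕ) : ℝ)) ∧
    StrictMono fun n => (wordPow (V n) (w n)).length

/-- The Diophantine exponent of an infinite word: the supremum of the `ρ` such that the word
satisfies Condition `(*)_ρ`. -/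
def dioExp {A : Type*} (b : ℕ → A) : EReal :=
  sSup {x : EReal | ∃ ρ : ℝ, x = (ρ : EReal) ∧ SatisfiesCond b ρ}

/-- The complexity function: the number of distinct blocks of `n` consecutive letters. -/
def complexity {A : Type*} (b : ℕ → A) (n : ℕ) : ℕ∞ :=
  {w : Fin n → A | ∃ i : ℕ, ∀ k : Fin n, w k = b (i + k)}.encard

/-- The infinite word `b` is ultimately periodic. -/
def UltimatelyPeriodic {A : Type*} (b : ℕ → A) : Prop :=
  ∃ N T : ℕ, 0 < T ∧ ∀ n, N ≤ n → b (n + T) = b n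

variable {Fq}

/-!
Two mechanisms produce good quadratic approximations to `ξ`.

*The bound `2`.* As in Davenport and Schmidt's work on quadratic approximation, Dirichlet's
theorem yields a sequence of minimal polynomials `P_k` of degree at most two with `|P_k(ξ)| ≤
H(P_{k+1})⁻²`. Such a polynomial has a root at distance at most `|P_k(ξ)| / |P_k'(ξ)|` from `ξ`,
so the bound holds unless `|P_k'(ξ)| < |P_k(ξ)| H(P_k)^(3 - η)` for all large `k`. In that case
let `w_k` be the minor of `(P_k(ξ), P_k'(ξ))` and `(P_{k+1}(ξ), P_{k+1}'(ξ))`, divided by the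
same minor with `P_k'(ξ)` replaced by the leading coefficient. The determinant of three
consecutive `P_k` lies in `F_q[T]`, so it is zero or of absolute value at least one, and in both
cases `|w_k| ≤ |w_{k+1}|`. But `|w_k| ≤ H(P_{k+1})^(-η)` tends to zero. Hence `w_k = 0` for all
`k`, so that `P_k'(ξ) = r P_k(ξ)` with `r` independent of `k`. The `2 × 2` minors of the
coefficients, again in `F_q[T]`, are then eventually smaller than one and therefore zero, which
contradicts the independence of consecutive minimal polynomials.

*The Diophantine exponent.* If the word of partial quotients begins with `U V^w`, then the
quadratic polynomial attached to the eventually periodic continued fraction `[0, U, V, V, …]` is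
small at `ξ`: it is `L_r L_{u+1} - L_{r+1} L_u` with `L_n = q_{n-1} X - p_{n-1}`, `r = |U|` and
`u = |UV|`, and its value at `ξ` only changes sign when `r` and `u` are shifted along the
repetition. Its derivative at `ξ` has absolute value exactly `|q_u| / |q_r|`, so no bound on the
partial quotients is needed.
-/

section NonarchimedeanAbsoluteValue

variable {R S : Type*} [CommRing R] [CommRing S] {v : AbsoluteValue R ℝ}

lemma map_sub_le_max (hv : IsNonarchimedean v) (x y : R) : v (x - y) ≤ max (v x) (v y) := by
  simpa only [sub_eq_add_neg, map_neg_eq_map] using hv x (-y)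

lemma map_sum_le_of_forall_le (hv : IsNonarchimedean v) {ι : Type*} (s : Finset ι) {f : ι → R}
    {c : ℝ} (hc : 0 ≤ c) (h : ∀ i ∈ s, v (f i) ≤ c) : v (∑ i ∈ s, f i) ≤ c := by
  rcases s.eq_empty_or_nonempty with rfl | hs
  · simpa only [Finset.sum_empty, map_zero] using hc
  · obtain ⟨i, hi, hle⟩ := hv.finset_image_add_of_nonempty f hs
    exact hle.trans (h i hi)

lemma map_eval₂_le [IsDomain R] (hv : IsNonarchimedean v) (ι : S →+* R) (P : S[X]) {x : R} {c : ℝ}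
    (hx : v x ≤ 1) (hP : ∀ i, v (ι (P.coeff i)) ≤ c) : v (P.eval₂ ι x) ≤ c := by
  have hc : 0 ≤ c := (v.nonneg _).trans (hP 0)
  rw [eval₂_eq_sum_range]
  refine map_sum_le_of_forall_le hv _ hc fun i _ => ?_
  calc v (ι (P.coeff i) * x ^ i) = v (ι (P.coeff i)) * v x ^ i := by rw [map_mul, map_pow]
    _ ≤ c * 1 := mul_le_mul (hP i) (pow_le_one₀ (v.nonneg x) hx) (by positivity) hc
    _ = c := mul_one c

lemma map_pow_sub_pow_le [IsDomain R] (hv : IsNonarchimedean v) {x y : R} (hx : v x ≤ 1)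
    (hy : v y ≤ 1) (n : ℕ) : v (x ^ n - y ^ n) ≤ v (x - y) := by
  rw [← geom_sum₂_mul, map_mul]
  refine mul_le_of_le_one_left (v.nonneg _) (map_sum_le_of_forall_le hv _ zero_le_one fun i _ => ?_)
  rw [map_mul, map_pow, map_pow]
  exact mul_le_one₀ (pow_le_one₀ (v.nonneg x) hx) (by positivity) (pow_le_one₀ (v.nonneg y) hy)

lemma map_eval₂_sub_eval₂_le [IsDomain R] (hv : IsNonarchimedean v) (ι : S →+* R) (P : S[X])
    {x y : R} {c : ℝ} (hx : v x ≤ 1) (hy : v y ≤ 1) (hP : ∀ i, v (ι (P.coeff i)) ≤ c) :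
    v (P.eval₂ ι x - P.eval₂ ι y) ≤ v (x - y) * c := by
  have hc : 0 ≤ c := (v.nonneg _).trans (hP 0)
  rw [eval₂_eq_sum_range, eval₂_eq_sum_range, ← Finset.sum_sub_distrib]
  refine map_sum_le_of_forall_le hv _ (by positivity) fun i _ => ?_
  rw [← mul_sub, map_mul, mul_comm]
  exact mul_le_mul (map_pow_sub_pow_le hv hx hy i) (hP i) (v.nonneg _) (v.nonneg _)

end NonarchimedeanAbsoluteValue

/-! ### The absolute value of `F_q((T⁻¹))` -/

variable (Fq) in
/-- The number `q` of elements of the constant field, as a real number; it is `|T|`. -/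
def qR : ℝ := Fintype.card Fq

variable (Fq) in
lemma one_lt_qR : 1 < qR Fq := Nat.one_lt_cast.mpr Fintype.one_lt_card

variable (Fq) in
lemma qR_pos : 0 < qR Fq := one_pos.trans (one_lt_qR Fq)

lemma kabs_of_ne_zero {f : K Fq} (hf : f ≠ 0) : kabs Fq f = qR Fq ^ (-f.order) := if_neg hf

lemma kabs_mul (f g : K Fq) : kabs Fq (f * g) = kabs Fq f * kabs Fq g := by
  by_cases hf : f = 0
  · simp [hf, kabs]
  by_cases hg : g = 0
  · simp [hg, kabs]
  rw [kabs_of_ne_zero hf, kabs_of_ne_zero hg, kabs_of_ne_zero (mul_ne_zero hf hg),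
    HahnSeries.order_mul hf hg, ← zpow_add₀ (qR_pos Fq).ne', neg_add]

lemma kabs_nonneg (f : K Fq) : 0 ≤ kabs Fq f := by
  unfold kabs
  split_ifs <;> positivity

lemma kabs_eq_zero {f : K Fq} : kabs Fq f = 0 ↔ f = 0 := by
  refine ⟨fun h => by_contra fun hf => ?_, fun h => if_pos h⟩
  exact (zpow_pos (qR_pos Fq) _).ne' (kabs_of_ne_zero hf ▸ h)

lemma kabs_le_zpow_iff {f : K Fq} {n : ℤ} :
    kabs Fq f ≤ qR Fq ^ (-n) ↔ ∀ j < n, f.coeff j = 0 := by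
  by_cases hf : f = 0
  · simp [hf, kabs, (zpow_pos (qR_pos Fq) n).le]
  · rw [kabs_of_ne_zero hf, zpow_le_zpow_iff_right₀ (one_lt_qR Fq), neg_le_neg_iff,
      HahnSeries.le_order_iff_forall hf]

variable (Fq) in
lemma isNonarchimedean_kabs : IsNonarchimedean (kabs Fq) := by
  intro f g
  by_cases hf : f = 0
  · simp [hf]
  by_cases hg : g = 0
  · simp [hg]
  by_cases hfg : f + g = 0
  · simp [kabs_eq_zero.mpr hfg, kabs_nonneg]
  have hq := (one_lt_qR Fq).le
  rw [kabs_of_ne_zero hf, kabs_of_ne_zero hg, kabs_of_ne_zero hfg, le_max_iff]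
  refine (min_le_iff.mp (HahnSeries.min_order_le_order_add hfg)).imp ?_ ?_ <;>
    exact fun h => zpow_le_zpow_right₀ hq (neg_le_neg h)

variable (Fq) in
/-- `kabs` bundled as an absolute value, giving access to the library on absolute values. -/
def kabsAbv : AbsoluteValue (K Fq) ℝ where
  toFun := kabs Fq
  map_mul' := kabs_mul
  nonneg' := kabs_nonneg
  eq_zero' _ := kabs_eq_zero
  add_le' _ _ := (isNonarchimedean_kabs Fq).add_le kabs_nonneg

variable (Fq) in
lemma isNonarchimedean_kabsAbv : IsNonarchimedean (kabsAbv Fq) := isNonarchimedean_kabs Fq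

lemma kabs_pos {f : K Fq} : 0 < kabs Fq f ↔ f ≠ 0 := (kabsAbv Fq).pos_iff

lemma kabs_zero : kabs Fq 0 = 0 := map_zero (kabsAbv Fq)

lemma kabs_one : kabs Fq 1 = 1 := map_one (kabsAbv Fq)

lemma kabs_neg (f : K Fq) : kabs Fq (-f) = kabs Fq f := map_neg_eq_map (kabsAbv Fq) f

lemma kabs_pow (f : K Fq) (n : ℕ) : kabs Fq (f ^ n) = kabs Fq f ^ n := map_pow (kabsAbv Fq) f n

lemma kabs_add_eq_left {f g : K Fq} (h : kabs Fq g < kabs Fq f) :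
    kabs Fq (f + g) = kabs Fq f :=
  (isNonarchimedean_kabsAbv Fq).add_eq_left_of_lt h

lemma kabs_C {c : Fq} (hc : c ≠ 0) : kabs Fq (HahnSeries.C c) = 1 := by
  rw [kabs_of_ne_zero (HahnSeries.C_ne_zero hc), HahnSeries.order_C, neg_zero, zpow_zero]

lemma kabs_TT : kabs Fq (TT Fq) = qR Fq := by
  rw [TT, kabs_of_ne_zero (HahnSeries.single_ne_zero one_ne_zero),
    HahnSeries.order_single one_ne_zero, neg_neg, zpow_one]

lemma kabs_polyToK {p : Fq[X]} (hp : p ≠ 0) : kabs Fq (polyToK Fq p) = qR Fq ^ p.natDegree := by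
  have hterm {i : ℕ} (hi : p.coeff i ≠ 0) :
      kabs Fq (HahnSeries.C (p.coeff i) * TT Fq ^ i) = qR Fq ^ i := by
    rw [kabs_mul, kabs_C hi, kabs_pow, kabs_TT, one_mul]
  have hlead := hterm (leadingCoeff_ne_zero.mpr hp)
  rw [polyToK, coe_eval₂RingHom, eval₂_eq_sum_range, ← hlead]
  refine (isNonarchimedean_kabs Fq).apply_sum_eq_of_lt (fun a => (kabs_neg a).symm)
    (Finset.self_mem_range_succ _) fun i hi hne => ?_
  by_cases hpi : p.coeff i = 0
  · rw [hpi, map_zero, zero_mul, kabs_zero, hlead]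
    exact pow_pos (qR_pos Fq) _
  · rw [hterm hpi, hlead]
    have := Finset.mem_range.mp hi
    exact pow_lt_pow_right₀ (one_lt_qR Fq) (by omega)

lemma one_le_kabs_polyToK {p : Fq[X]} (hp : p ≠ 0) : 1 ≤ kabs Fq (polyToK Fq p) :=
  kabs_polyToK hp ▸ one_le_pow₀ (one_lt_qR Fq).le

lemma eq_zero_of_kabs_polyToK_lt_one {p : Fq[X]} (hp : kabs Fq (polyToK Fq p) < 1) : p = 0 :=
  by_contra fun h => (one_le_kabs_polyToK h).not_gt hp

lemma kabs_polyToK_le_pow_iff {p : Fq[X]} {n : ℕ} :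
    kabs Fq (polyToK Fq p) ≤ qR Fq ^ n ↔ p.natDegree ≤ n := by
  by_cases hp : p = 0
  · simp [hp, kabs_zero, (pow_pos (qR_pos Fq) n).le]
  · rw [kabs_polyToK hp, pow_le_pow_iff_right₀ (one_lt_qR Fq)]

lemma coeff_polyToK {F : Type} [Field F] (p : F[X]) (i : ℕ) :
    (polyToK F p).coeff (-i : ℤ) = p.coeff i := by
  induction p using Polynomial.induction_on' with
  | add p r hp hr => rw [map_add, HahnSeries.coeff_add, hp, hr, coeff_add]
  | monomial n a =>
    rw [polyToK, coe_eval₂RingHom, eval₂_monomial, TT, HahnSeries.single_pow, HahnSeries.C_apply,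
      HahnSeries.single_mul_single, coeff_monomial]
    simp [HahnSeries.coeff_single, eq_comm]

lemma polyToK_injective (F : Type) [Field F] : Function.Injective (polyToK F) := fun p r h =>
  Polynomial.ext fun i => by rw [← coeff_polyToK, h, coeff_polyToK]

/-! ### Heights -/

variable (Fq) in
/-- The absolute value of `F_q((T⁻¹))` restricted to `F_q[T]`. -/
def polyAbv : AbsoluteValue Fq[X] ℝ := (kabsAbv Fq).comp (polyToK_injective Fq)

variable (Fq) in
lemma isNonarchimedean_polyAbv : IsNonarchimedean (polyAbv Fq) := fun p r => by
  calc kabs Fq (polyToK Fq (p + r)) = kabs Fq (polyToK Fq p + polyToK Fq r) := by rw [map_add]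
    _ ≤ _ := isNonarchimedean_kabs Fq _ _

lemma kabs_coeff_le_gaussNorm (P : Fq[X][X]) (i : ℕ) :
    kabs Fq (polyToK Fq (P.coeff i)) ≤ P.gaussNorm (polyAbv Fq) 1 := by
  have h := P.le_gaussNorm (polyAbv Fq) zero_le_one i
  rwa [one_pow, mul_one] at h

lemma Hpoly_eq_gaussNorm (P : Fq[X][X]) : Hpoly Fq P = P.gaussNorm (polyAbv Fq) 1 := by
  refine le_antisymm (ciSup_le (kabs_coeff_le_gaussNorm P)) ?_
  obtain ⟨i, hi⟩ := P.exists_eq_gaussNorm (polyAbv Fq) 1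
  rw [hi, one_pow, mul_one]
  exact le_ciSup (f := fun i => kabs Fq (polyToK Fq (P.coeff i)))
    ⟨_, Set.forall_mem_range.mpr (kabs_coeff_le_gaussNorm P)⟩ i

lemma kabs_coeff_le_Hpoly (P : Fq[X][X]) (i : ℕ) :
    kabs Fq (polyToK Fq (P.coeff i)) ≤ Hpoly Fq P :=
  Hpoly_eq_gaussNorm P ▸ kabs_coeff_le_gaussNorm P i

lemma Hpoly_le {P : Fq[X][X]} {c : ℝ} (h : ∀ i, kabs Fq (polyToK Fq (P.coeff i)) ≤ c) :
    Hpoly Fq P ≤ c := ciSup_le h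

lemma one_le_Hpoly {P : Fq[X][X]} (hP : P ≠ 0) : 1 ≤ Hpoly Fq P :=
  (one_le_kabs_polyToK (leadingCoeff_ne_zero.mpr hP)).trans (kabs_coeff_le_Hpoly P _)

lemma Hpoly_mul (P R : Fq[X][X]) : Hpoly Fq (P * R) = Hpoly Fq P * Hpoly Fq R := by
  simp only [Hpoly_eq_gaussNorm]
  exact gaussNorm_mul (isNonarchimedean_polyAbv Fq) one_pos P R

lemma Hpoly_le_of_dvd {P R : Fq[X][X]} (h : P ∣ R) (hR : R ≠ 0) : Hpoly Fq P ≤ Hpoly Fq R := by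
  obtain ⟨S, rfl⟩ := h
  rw [Hpoly_mul]
  exact le_mul_of_one_le_right (zero_le_one.trans (one_le_Hpoly (left_ne_zero_of_mul hR)))
    (one_le_Hpoly (right_ne_zero_of_mul hR))

/-- The logarithmic height of `P` over `F[T]`: the largest degree in `T` of its coefficients. -/
def heightDeg {F : Type*} [Field F] (P : F[X][X]) : ℕ :=
  P.support.sup fun i => (P.coeff i).natDegree

lemma heightDeg_le_iff {F : Type*} [Field F] {P : F[X][X]} {h : ℕ} :
    heightDeg P ≤ h ↔ ∀ i, (P.coeff i).natDegree ≤ h := by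
  refine Finset.sup_le_iff.trans (forall_congr' fun i => ?_)
  by_cases hi : P.coeff i = 0 <;> simp [hi]

lemma Hpoly_eq_pow_heightDeg {P : Fq[X][X]} (hP : P ≠ 0) :
    Hpoly Fq P = qR Fq ^ heightDeg P := by
  refine le_antisymm (Hpoly_le fun i => ?_) ?_
  · exact kabs_polyToK_le_pow_iff.mpr (heightDeg_le_iff.mp le_rfl i)
  · obtain ⟨i, hi, h⟩ := Finset.exists_mem_eq_sup P.support (nonempty_support_iff.mpr hP)
      fun i => (P.coeff i).natDegree
    rw [heightDeg, h, ← kabs_polyToK (mem_support_iff.mp hi)]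
    exact kabs_coeff_le_Hpoly P i

lemma finite_setOf_natDegree_le_heightDeg_le {F : Type*} [Field F] [Finite F] (n h : ℕ) :
    {P : F[X][X] | P.natDegree ≤ n ∧ heightDeg P ≤ h}.Finite := by
  refine Set.Finite.of_finite_image
    (f := fun P (i : Fin (n + 1)) (j : Fin (h + 1)) => (P.coeff i).coeff j) (Set.toFinite _) ?_
  rintro P ⟨hPn, hPh⟩ R ⟨hRn, hRh⟩ hPR
  refine Polynomial.ext fun i => Polynomial.ext fun j => ?_
  by_cases hi : i < n + 1
  · by_cases hj : j < h + 1
    · exact congr_fun (congr_fun hPR ⟨i, hi⟩) ⟨j, hj⟩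
    · have hPi := heightDeg_le_iff.mp hPh i
      have hRi := heightDeg_le_iff.mp hRh i
      rw [coeff_eq_zero_of_natDegree_lt (by omega), coeff_eq_zero_of_natDegree_lt (by omega)]
  · rw [coeff_eq_zero_of_natDegree_lt (p := P) (by omega),
      coeff_eq_zero_of_natDegree_lt (p := R) (by omega)]

lemma kabs_evalK_le_Hpoly {ξ : K Fq} (hξ : kabs Fq ξ ≤ 1) (P : Fq[X][X]) :
    kabs Fq (evalK Fq P ξ) ≤ Hpoly Fq P :=
  map_eval₂_le (isNonarchimedean_kabsAbv Fq) (polyToK Fq) P hξ (kabs_coeff_le_Hpoly P)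

/-! ### Algebraic elements -/

section AlgebraicElements

variable {F : Type} [Field F]

variable (F) in
lemma φ_injective : Function.Injective (φ F) :=
  (algebraMap (K F) (L F)).injective.comp (polyToK_injective F)

lemma toL_evalK (P : F[X][X]) (ξ : K F) : toL F (evalK F P ξ) = evalL F P (toL F ξ) :=
  hom_eval₂ P (polyToK F) (toL F) ξ

lemma exists_irreducible_evalL_eq_zero {P : F[X][X]} (hP : P ≠ 0) {α : L F}
    (hα : evalL F P α = 0) : ∃ R : F[X][X], Irreducible R ∧ evalL F R α = 0 := by
  have hker : RingHom.ker (eval₂RingHom (φ F) α) ≠ ⊥ := fun h =>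
    hP ((Submodule.mem_bot F[X][X]).mp (h ▸ RingHom.mem_ker.mpr hα))
  obtain ⟨R, hR, hprime⟩ := (RingHom.ker_isPrime _).exists_mem_prime_of_ne_bot hker
  exact ⟨R, hprime.irreducible, hR⟩

lemma natDegree_pos_of_evalL_eq_zero {P : F[X][X]} (hP : P ≠ 0) {α : L F}
    (hα : evalL F P α = 0) : 0 < P.natDegree := by
  refine Nat.pos_of_ne_zero fun h => hP ?_
  rw [eq_C_of_natDegree_eq_zero h] at hα ⊢
  rw [evalL, eval₂_C, map_eq_zero_iff _ (φ_injective F)] at hα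
  rw [hα, C_0]

lemma isAlgElem_of_evalL_eq_zero {P : F[X][X]} (hP : P ≠ 0) {α : L F}
    (hα : evalL F P α = 0) : IsAlgElem F α := by
  obtain ⟨R, hR, hRα⟩ := exists_irreducible_evalL_eq_zero hP hα
  have hl : R.leadingCoeff.leadingCoeff ≠ 0 :=
    leadingCoeff_ne_zero.mpr (leadingCoeff_ne_zero.mpr hR.ne_zero)
  have hu : IsUnit (C (C R.leadingCoeff.leadingCoeff⁻¹) : F[X][X]) :=
    isUnit_C.mpr (isUnit_C.mpr (inv_ne_zero hl).isUnit)
  have hirr := (irreducible_isUnit_mul hu).mpr hR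
  have hroot : evalL F (C (C R.leadingCoeff.leadingCoeff⁻¹) * R) α = 0 := by
    rw [evalL, eval₂_mul, ← evalL, ← evalL, hRα, mul_zero]
  have hdeg := natDegree_pos_of_evalL_eq_zero hirr.ne_zero hroot
  refine ⟨_, hdeg, hirr, hirr.isPrimitive hdeg.ne', ?_, hroot⟩
  rw [leadingCoeff_mul, leadingCoeff_C, Monic, leadingCoeff_mul, leadingCoeff_C,
    inv_mul_cancel₀ hl]

lemma IsMinPolyOf.dvd {Q P : F[X][X]} {α : L F} (hQ : IsMinPolyOf F Q α)
    (hα : evalL F P α = 0) : Q ∣ P := by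
  obtain ⟨-, hirr, hprim, -, hQα⟩ := hQ
  let E := FractionRing F[X]
  let ψ : E →+* L F := IsFractionRing.lift (φ_injective F)
  have hψ (R : F[X][X]) : (R.map (algebraMap F[X] E)).eval₂ ψ α = evalL F R α := by
    rw [eval₂_map, evalL]
    congr 1
    exact RingHom.ext fun p => by simp [ψ]
  refine hprim.dvd_of_fraction_map_dvd_fraction_map (K := E) (by_contra fun hdvd => ?_)
  have hirr' := hprim.irreducible_iff_irreducible_map_fraction_map (K := E).mp hirr
  obtain ⟨A, B, hAB⟩ := hirr'.coprime_iff_not_dvd.mpr hdvd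
  have := congrArg (eval₂ ψ α) hAB
  rw [eval₂_add, eval₂_mul, eval₂_mul, hψ, hψ, hα, hQα, eval₂_one] at this
  simp at this

lemma isMinPolyOf_minPolyPrim {α : L F} (h : IsAlgElem F α) :
    IsMinPolyOf F (minPolyPrim F α) α := by
  rw [minPolyPrim, dif_pos h]
  exact h.choose_spec

lemma minPolyPrim_dvd {P : F[X][X]} (hP : P ≠ 0) {α : L F} (hα : evalL F P α = 0) :
    minPolyPrim F α ∣ P :=
  (isMinPolyOf_minPolyPrim (isAlgElem_of_evalL_eq_zero hP hα)).dvd hα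

lemma degAlg_le_natDegree {P : F[X][X]} (hP : P ≠ 0) {α : L F} (hα : evalL F P α = 0) :
    degAlg F α ≤ P.natDegree :=
  natDegree_le_of_dvd (minPolyPrim_dvd hP hα) hP

lemma finite_setOf_evalL_eq_zero {P : F[X][X]} (hP : P ≠ 0) :
    {α : L F | evalL F P α = 0}.Finite := by
  refine (finite_setOfPred_isRoot ((Polynomial.map_ne_zero_iff (φ_injective F)).mpr hP)).subset ?_
  intro α hα
  rwa [Set.mem_ofPred_eq, IsRoot, eval_map]

end AlgebraicElements

lemma heightAlg_le_Hpoly {P : Fq[X][X]} (hP : P ≠ 0) {α : L Fq} (hα : evalL Fq P α = 0) :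
    heightAlg Fq α ≤ Hpoly Fq P :=
  Hpoly_le_of_dvd (minPolyPrim_dvd hP hα) hP

lemma one_le_heightAlg {α : L Fq} (h : IsAlgElem Fq α) : 1 ≤ heightAlg Fq α :=
  one_le_Hpoly (isMinPolyOf_minPolyPrim h).2.1.ne_zero

/-- An absolute value in the sense of `IsAbsExt`, bundled as an `AbsoluteValue`. -/
def IsAbsExt.toAbsoluteValue {v : L Fq → ℝ} (hv : IsAbsExt Fq v) : AbsoluteValue (L Fq) ℝ where
  toFun := v
  map_mul' := hv.map_mul
  nonneg' := hv.nonneg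
  eq_zero' := hv.eq_zero_iff
  add_le' _ _ := IsNonarchimedean.add_le hv.nonneg hv.add_le

lemma IsAbsExt.isNonarchimedean {v : L Fq → ℝ} (hv : IsAbsExt Fq v) :
    IsNonarchimedean hv.toAbsoluteValue := hv.add_le

lemma IsAbsExt.map_φ {v : L Fq → ℝ} (hv : IsAbsExt Fq v) (p : Fq[X]) :
    v (φ Fq p) = kabs Fq (polyToK Fq p) := hv.extends_kabs (polyToK Fq p)

lemma exists_mem_roots_map_sub_mul_le {E : Type*} [Field E] {v : AbsoluteValue E ℝ}
    (hv : IsNonarchimedean v) {P : E[X]} (hP : P.Splits) {x : E} (hx : P.eval x ≠ 0)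
    (hx' : P.derivative.eval x ≠ 0) :
    ∃ α ∈ P.roots, v (x - α) * v (P.derivative.eval x) ≤ v (P.eval x) := by
  have hsum := hP.eval_derivative_eq_eval_mul_sum hx
  have hroots : P.roots ≠ 0 := fun h => hx' (by rw [hsum, h, Multiset.map_zero,
    Multiset.sum_zero, mul_zero])
  obtain ⟨α, hα, hle⟩ := hv.multiset_image_add_of_nonempty (fun z => 1 / (x - z)) hroots
  refine ⟨α, hα, ?_⟩
  have hxα : 0 < v (x - α) := v.pos (sub_ne_zero.mpr fun h => hx (h ▸ isRoot_of_mem_roots hα))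
  calc v (x - α) * v (P.derivative.eval x)
      = v (x - α) * (v (P.eval x) * v ((P.roots.map fun z => 1 / (x - z)).sum)) := by
        rw [hsum, map_mul]
    _ ≤ v (x - α) * (v (P.eval x) * v (1 / (x - α))) := by gcongr
    _ = v (P.eval x) := by rw [map_div₀, map_one]; field_simp

lemma exists_isAlgElem_map_sub_le {v : L Fq → ℝ} (hv : IsAbsExt Fq v) {ξ : K Fq} {P : Fq[X][X]}
    (h0 : evalK Fq P ξ ≠ 0) (h1 : evalK Fq (derivative P) ξ ≠ 0) :
    ∃ α : L Fq, IsAlgElem Fq α ∧ degAlg Fq α ≤ P.natDegree ∧ heightAlg Fq α ≤ Hpoly Fq P ∧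
      0 < v (toL Fq ξ - α) ∧
      v (toL Fq ξ - α) ≤ kabs Fq (evalK Fq P ξ) / kabs Fq (evalK Fq (derivative P) ξ) := by
  have heval (R : Fq[X][X]) : (R.map (φ Fq)).eval (toL Fq ξ) = toL Fq (evalK Fq R ξ) := by
    rw [toL_evalK, evalL, eval_map]
  have hne {f : K Fq} (hf : f ≠ 0) : toL Fq f ≠ 0 := (map_ne_zero (toL Fq)).mpr hf
  obtain ⟨α, hα, hle⟩ := exists_mem_roots_map_sub_mul_le hv.isNonarchimedean
    (IsAlgClosed.splits (P.map (φ Fq))) (x := toL Fq ξ) (heval P ▸ hne h0)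
    (by rw [derivative_map, heval]; exact hne h1)
  rw [derivative_map, heval, heval] at hle
  have hP : P ≠ 0 := fun h => h0 (by rw [h, evalK, eval₂_zero])
  have hPα : evalL Fq P α = 0 := by rw [evalL, ← eval_map]; exact isRoot_of_mem_roots hα
  refine ⟨α, isAlgElem_of_evalL_eq_zero hP hPα, degAlg_le_natDegree hP hPα,
    heightAlg_le_Hpoly hP hPα, ?_, ?_⟩
  · refine hv.toAbsoluteValue.pos (sub_ne_zero.mpr fun h => hne h0 ?_)
    rw [toL_evalK, h, hPα]
  · rw [le_div_iff₀ (kabs_pos.mpr h1), ← hv.extends_kabs, ← hv.extends_kabs]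
    exact hle

/-! ### The exponents `w_n` and `w_n^*` -/

lemma infinite_of_forall_exists_map_lt {X : Type*} {f : X → ℝ} {s : Set X}
    (hpos : ∀ x ∈ s, 0 < f x) (h : ∀ δ > 0, ∃ x ∈ s, f x < δ) : s.Infinite := by
  intro hfin
  obtain ⟨x, hx, -⟩ := h 1 one_pos
  obtain ⟨y, hy, hmin⟩ := s.exists_min_image f hfin ⟨x, hx⟩
  obtain ⟨z, hz, hlt⟩ := h (f y) (hpos y hy)
  exact (hmin z hz).not_gt hlt

lemma coe_le_wExp {n : ℕ} {ξ : K Fq} {w : ℝ}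
    (h : ∀ δ > 0, ∃ P : Fq[X][X], P.natDegree ≤ n ∧ evalK Fq P ξ ≠ 0 ∧
      kabs Fq (evalK Fq P ξ) < δ ∧ kabs Fq (evalK Fq P ξ) ≤ Hpoly Fq P ^ (-w)) :
    (w : EReal) ≤ wExp Fq n ξ := by
  refine le_sSup ⟨w, rfl, infinite_of_forall_exists_map_lt
    (f := fun P => kabs Fq (evalK Fq P ξ)) (fun P hP => hP.2.1) fun δ hδ => ?_⟩
  obtain ⟨P, hdeg, hne, hlt, hle⟩ := h δ hδ
  exact ⟨P, ⟨hdeg, kabs_pos.mpr hne, hle⟩, hlt⟩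

lemma coe_le_wStarExp {v : L Fq → ℝ} (hv : IsAbsExt Fq v) {n : ℕ} {ξ : K Fq} {w : ℝ} (hw : -1 ≤ w)
    (h : ∀ δ > 0, ∃ P : Fq[X][X], P.natDegree ≤ n ∧ evalK Fq P ξ ≠ 0 ∧
      evalK Fq (derivative P) ξ ≠ 0 ∧
      kabs Fq (evalK Fq P ξ) / kabs Fq (evalK Fq (derivative P) ξ) < δ ∧
      kabs Fq (evalK Fq P ξ) / kabs Fq (evalK Fq (derivative P) ξ) ≤ Hpoly Fq P ^ (-w - 1)) :
    (w : EReal) ≤ wStarExp Fq v n ξ := by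
  refine le_sSup ⟨w, rfl, infinite_of_forall_exists_map_lt
    (f := fun α => v (toL Fq ξ - α)) (fun α hα => hα.2.2.1) fun δ hδ => ?_⟩
  obtain ⟨P, hdeg, hne, hne', hlt, hle⟩ := h δ hδ
  obtain ⟨α, hα, hαdeg, hαH, hpos, hαle⟩ := exists_isAlgElem_map_sub_le hv hne hne'
  refine ⟨α, ⟨hα, hαdeg.trans hdeg, hpos, hαle.trans (hle.trans ?_)⟩, hαle.trans_lt hlt⟩
  exact Real.rpow_le_rpow_of_nonpos (one_pos.trans_le (one_le_heightAlg hα)) hαH (by linarith)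

lemma neg_one_le_wExp (n : ℕ) (ξ : K Fq) : (-1 : EReal) ≤ wExp Fq n ξ := by
  refine le_sSup ⟨-1, by norm_num, Set.infinite_of_injective_forall_mem
    (f := fun k : ℕ => (C (X ^ k) : Fq[X][X])) (fun k l hkl => ?_) fun k => ?_⟩
  · simpa only [natDegree_X_pow] using congrArg natDegree (C_injective hkl)
  · have heval : evalK Fq (C (X ^ k)) ξ = polyToK Fq (X ^ k) := by rw [evalK, eval₂_C]
    refine ⟨(natDegree_C _).trans_le n.zero_le, ?_, ?_⟩ <;> rw [heval]
    · exact one_pos.trans_le (one_le_kabs_polyToK (pow_ne_zero k X_ne_zero))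
    · rw [neg_neg, Real.rpow_one]
      simpa only [coeff_C_zero] using kabs_coeff_le_Hpoly (C (X ^ k : Fq[X])) 0

/-- `ξ` is not a root of any nonzero polynomial of degree at most `n` over `F[T]`. -/
def NotRootOfDegreeLE {F : Type} [Field F] (n : ℕ) (ξ : K F) : Prop :=
  ∀ P : F[X][X], P ≠ 0 → P.natDegree ≤ n → evalK F P ξ ≠ 0

lemma IsAbsExt.map_le_one {v : L Fq → ℝ} (hv : IsAbsExt Fq v) {ξ : K Fq} (hξ : kabs Fq ξ ≤ 1)
    {α : L Fq} (hα : v (toL Fq ξ - α) ≤ 1) : v α ≤ 1 := by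
  have h := map_sub_le_max hv.isNonarchimedean (toL Fq ξ) (toL Fq ξ - α)
  rw [sub_sub_cancel] at h
  exact h.trans (max_le ((hv.extends_kabs ξ).trans_le hξ) hα)

lemma IsAbsExt.kabs_evalK_le {v : L Fq → ℝ} (hv : IsAbsExt Fq v) {ξ : K Fq}
    (hξ : kabs Fq ξ ≤ 1) {α : L Fq} (hα : v (toL Fq ξ - α) ≤ 1) {P : Fq[X][X]}
    (hPα : evalL Fq P α = 0) :
    kabs Fq (evalK Fq P ξ) ≤ v (toL Fq ξ - α) * Hpoly Fq P := by
  have h := map_eval₂_sub_eval₂_le hv.isNonarchimedean (φ Fq) P (x := toL Fq ξ) (y := α)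
    ((hv.extends_kabs ξ).trans_le hξ) (hv.map_le_one hξ hα)
    fun i => (hv.map_φ _).trans_le (kabs_coeff_le_Hpoly P i)
  rwa [← evalL, ← evalL, hPα, sub_zero, ← toL_evalK, IsAbsExt.toAbsoluteValue,
    AbsoluteValue.coe_mk, MulHom.coe_mk, hv.extends_kabs] at h

theorem wStarExp_le_wExp {v : L Fq → ℝ} (hv : IsAbsExt Fq v) {n : ℕ} {ξ : K Fq}
    (hξ : kabs Fq ξ ≤ 1) (hroot : NotRootOfDegreeLE n ξ) : wStarExp Fq v n ξ ≤ wExp Fq n ξ := by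
  refine sSup_le ?_
  rintro _ ⟨w, rfl, hinf⟩
  rcases le_total w (-1) with hw | hw
  · exact (EReal.coe_le_coe_iff.mpr hw).trans (neg_one_le_wExp n ξ)
  refine le_sSup ⟨w, rfl, fun hfin => hinf ?_⟩
  refine ((hfin.inter_of_left {P | P ≠ 0}).biUnion fun P hP =>
    finite_setOf_evalL_eq_zero hP.2).subset ?_
  rintro α ⟨hα, hdeg, -, hle⟩
  obtain ⟨-, hirr, -, -, hroot'⟩ := isMinPolyOf_minPolyPrim hα
  have hH := one_le_heightAlg hα
  have hα1 := hle.trans (Real.rpow_le_one_of_one_le_of_nonpos hH (by linarith))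
  refine Set.mem_biUnion ⟨⟨hdeg, kabs_pos.mpr (hroot _ hirr.ne_zero hdeg), ?_⟩, hirr.ne_zero⟩ hroot'
  calc kabs Fq (evalK Fq (minPolyPrim Fq α) ξ)
      ≤ v (toL Fq ξ - α) * heightAlg Fq α := hv.kabs_evalK_le hξ hα1 hroot'
    _ ≤ heightAlg Fq α ^ (-w - 1) * heightAlg Fq α := by gcongr
    _ = heightAlg Fq α ^ (-w) := by
      rw [Real.rpow_sub_one (by positivity), div_mul_cancel₀ _ (by positivity)]

/-! ### Dirichlet's theorem and minimal polynomials -/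

section EvaluationCoefficients

variable {F : Type} [Field F]

lemma evalK_smul (c : F) (P : F[X][X]) (ξ : K F) : evalK F (c • P) ξ = c • evalK F P ξ := by
  have hc : c • P = C (C c) * P := by
    ext i j
    simp only [coeff_smul, smul_eq_mul, coeff_C_mul]
  have hpoly : polyToK F (C c) = HahnSeries.C c := eval₂_C _ _
  rw [hc, evalK, evalK, eval₂_mul, eval₂_C, hpoly, HahnSeries.C_mul_eq_smul]

/-- Evaluation at `ξ`, as a map that is linear over the constant field. -/
def evalKₗ (ξ : K F) : F[X][X] →ₗ[F] K F where
  toFun P := evalK F P ξ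
  map_add' _ _ := eval₂_add (polyToK F) ξ
  map_smul' c P := evalK_smul c P ξ

/-- The polynomial of degree at most `n` in `X` with prescribed coefficients, each of degree at
most `h` in `T`. -/
def ofCoeffs (n h : ℕ) : (Fin (n + 1) → degreeLT F (h + 1)) →ₗ[F] F[X][X] :=
  (((degreeLT F[X] (n + 1)).subtype ∘ₗ
      (degreeLTEquiv F[X] (n + 1)).symm.toLinearMap).restrictScalars F) ∘ₗ
    (degreeLT F (h + 1)).subtype.compLeft (Fin (n + 1))

lemma ofCoeffs_injective (n h : ℕ) : Function.Injective (ofCoeffs (F := F) n h) :=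
  (Subtype.val_injective.comp (degreeLTEquiv F[X] (n + 1)).symm.injective).comp
    (Subtype.val_injective.comp_left)

lemma natDegree_ofCoeffs_le (n h : ℕ) (t : Fin (n + 1) → degreeLT F (h + 1)) :
    (ofCoeffs n h t).natDegree ≤ n :=
  natDegree_le_iff_degree_le.mpr <| mem_degreeLE.mp <| degreeLT_succ_eq_degreeLE (R := F[X]) ▸
    ((degreeLTEquiv F[X] (n + 1)).symm fun i => (t i : F[X])).2

lemma coeff_ofCoeffs (n h : ℕ) (t : Fin (n + 1) → degreeLT F (h + 1)) (i : Fin (n + 1)) :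
    (ofCoeffs n h t).coeff i = t i :=
  congrFun ((degreeLTEquiv F[X] (n + 1)).apply_symm_apply fun i => (t i : F[X])) i

lemma heightDeg_ofCoeffs_le (n h : ℕ) (t : Fin (n + 1) → degreeLT F (h + 1)) :
    heightDeg (ofCoeffs n h t) ≤ h := by
  refine heightDeg_le_iff.mpr fun i => ?_
  rcases lt_or_ge i (n + 1) with hi | hi
  · rw [coeff_ofCoeffs n h t ⟨i, hi⟩]
    exact natDegree_le_iff_degree_le.mpr <| mem_degreeLE.mp <|
      degreeLT_succ_eq_degreeLE (R := F) ▸ (t ⟨i, hi⟩).2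
  · rw [coeff_eq_zero_of_natDegree_lt ((natDegree_ofCoeffs_le n h t).trans_lt hi), natDegree_zero]
    exact h.zero_le

end EvaluationCoefficients

/- The coefficients of `P(ξ)` at `T ^ h, …, T ^ (-(n * h + n - 1))` impose `(n + 1) * h + n` linear
conditions on the `(n + 1) * (h + 1)` coefficients of `P`. -/
lemma exists_kabs_evalK_le {ξ : K Fq} (hξ : kabs Fq ξ ≤ 1) (n h : ℕ) :
    ∃ P : Fq[X][X], P ≠ 0 ∧ P.natDegree ≤ n ∧ heightDeg P ≤ h ∧
      kabs Fq (evalK Fq P ξ) ≤ qR Fq ^ (-(n * h + n : ℤ)) := by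
  let f : (Fin (n + 1) → degreeLT Fq (h + 1)) →ₗ[Fq] (Fin ((n + 1) * h + n) → Fq) :=
    LinearMap.pi fun i =>
      HahnSeries.coeff.linearMap ((i : ℤ) - h) ∘ₗ evalKₗ ξ ∘ₗ ofCoeffs n h
  have hrank : Module.finrank Fq (Fin ((n + 1) * h + n) → Fq) <
      Module.finrank Fq (Fin (n + 1) → degreeLT Fq (h + 1)) := by
    simp only [Module.finrank_pi_fintype, (degreeLTEquiv Fq (h + 1)).finrank_eq,
      Finset.sum_const, Finset.card_univ, Fintype.card_fin, smul_eq_mul, Module.finrank_self]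
    lia
  obtain ⟨t, ht, ht0⟩ :=
    (Submodule.ne_bot_iff _).mp (LinearMap.ker_ne_bot_of_finrank_lt (f := f) hrank)
  have hP : ofCoeffs n h t ≠ 0 := fun h0 =>
    ht0 (ofCoeffs_injective n h (h0.trans (map_zero _).symm))
  refine ⟨ofCoeffs n h t, hP, natDegree_ofCoeffs_le n h t, heightDeg_ofCoeffs_le n h t,
    kabs_le_zpow_iff.mpr fun j hj => ?_⟩
  rcases lt_or_ge j (-h) with hjh | hjh
  · refine kabs_le_zpow_iff.mp ?_ j hjh
    rw [neg_neg, zpow_natCast]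
    calc kabs Fq (evalK Fq (ofCoeffs n h t) ξ) ≤ Hpoly Fq (ofCoeffs n h t) :=
          kabs_evalK_le_Hpoly hξ _
      _ ≤ qR Fq ^ h := by
        rw [Hpoly_eq_pow_heightDeg hP]
        exact pow_le_pow_right₀ (one_lt_qR Fq).le (heightDeg_ofCoeffs_le n h t)
  · have hlt : (j + h).toNat < (n + 1) * h + n := by
      zify
      rw [Int.toNat_of_nonneg (by lia)]
      linarith
    have hidx : (((j + h).toNat : ℕ) : ℤ) - h = j := by lia
    have hcoeff : (evalK Fq (ofCoeffs n h t) ξ).coeff (((j + h).toNat : ℤ) - h) = 0 :=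
      congrFun (LinearMap.mem_ker.mp ht) ⟨(j + h).toNat, hlt⟩
    rwa [hidx] at hcoeff

/-- `P` is a best approximation to `0` at `ξ` among the nonzero polynomials of degree at most `n`
whose coefficients have degree at most `heightDeg P`: a minimal polynomial in the sense of
Davenport and Schmidt. -/
structure IsBestApprox (n : ℕ) (ξ : K Fq) (P : Fq[X][X]) : Prop where
  ne_zero : P ≠ 0
  natDegree_le : P.natDegree ≤ n
  kabs_le : ∀ R : Fq[X][X], R ≠ 0 → R.natDegree ≤ n → heightDeg R ≤ heightDeg P →
    kabs Fq (evalK Fq P ξ) ≤ kabs Fq (evalK Fq R ξ)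

lemma exists_isBestApprox_of_heightDeg_le (ξ : K Fq) {n h : ℕ} {R : Fq[X][X]} (hR : R ≠ 0)
    (hn : R.natDegree ≤ n) (hh : heightDeg R ≤ h) :
    ∃ P, IsBestApprox n ξ P ∧ heightDeg P ≤ h ∧
      kabs Fq (evalK Fq P ξ) ≤ kabs Fq (evalK Fq R ξ) := by
  obtain ⟨P, ⟨hP, hP0⟩, hmin⟩ := Set.exists_min_image
    ({S : Fq[X][X] | S.natDegree ≤ n ∧ heightDeg S ≤ h} ∩ {S | S ≠ 0})
    (fun S => kabs Fq (evalK Fq S ξ)) ((finite_setOf_natDegree_le_heightDeg_le n h).inter_of_left _)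
    ⟨R, ⟨hn, hh⟩, hR⟩
  exact ⟨P, ⟨hP0, hP.1, fun S hS hSn hSh => hmin S ⟨⟨hSn, hSh.trans hP.2⟩, hS⟩⟩, hP.2,
    hmin R ⟨⟨hn, hh⟩, hR⟩⟩

lemma exists_kabs_evalK_lt {ξ : K Fq} (hξ : kabs Fq ξ ≤ 1) {n : ℕ} (hn : 1 ≤ n) {δ : ℝ}
    (hδ : 0 < δ) :
    ∃ P : Fq[X][X], P ≠ 0 ∧ P.natDegree ≤ n ∧ kabs Fq (evalK Fq P ξ) < δ := by
  obtain ⟨h, hh⟩ := exists_pow_lt_of_lt_one hδ (inv_lt_one_of_one_lt₀ (one_lt_qR Fq))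
  obtain ⟨P, hP, hPn, -, hle⟩ := exists_kabs_evalK_le hξ n h
  refine ⟨P, hP, hPn, hle.trans_lt (lt_of_le_of_lt ?_ hh)⟩
  rw [inv_pow, ← zpow_natCast, ← zpow_neg]
  have hnh : (h : ℤ) ≤ n * h := by exact_mod_cast Nat.le_mul_of_pos_left h hn
  exact zpow_le_zpow_right₀ (one_lt_qR Fq).le (by linarith)

lemma IsBestApprox.exists_next {n : ℕ} {ξ : K Fq} {P : Fq[X][X]} (hP : IsBestApprox n ξ P)
    (hξ : kabs Fq ξ ≤ 1) (hn : 1 ≤ n) (hroot : NotRootOfDegreeLE n ξ) :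
    ∃ R, IsBestApprox n ξ R ∧ heightDeg P < heightDeg R ∧
      kabs Fq (evalK Fq R ξ) < kabs Fq (evalK Fq P ξ) ∧
      ∀ S : Fq[X][X], S ≠ 0 → S.natDegree ≤ n → heightDeg S < heightDeg R →
        kabs Fq (evalK Fq P ξ) ≤ kabs Fq (evalK Fq S ξ) := by
  classical
  have hex : ∃ h : ℕ, ∃ S : Fq[X][X], S ≠ 0 ∧ S.natDegree ≤ n ∧ heightDeg S ≤ h ∧
      kabs Fq (evalK Fq S ξ) < kabs Fq (evalK Fq P ξ) := by
    obtain ⟨S, hS, hSn, hlt⟩ :=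
      exists_kabs_evalK_lt hξ hn (kabs_pos.mpr (hroot P hP.ne_zero hP.natDegree_le))
    exact ⟨_, S, hS, hSn, le_rfl, hlt⟩
  obtain ⟨S, hS, hSn, hSh, hSlt⟩ := Nat.find_spec hex
  obtain ⟨R, hR, hRh, hRS⟩ := exists_isBestApprox_of_heightDeg_le ξ hS hSn hSh
  have hRP := hRS.trans_lt hSlt
  have hRfind : heightDeg R = Nat.find hex :=
    hRh.antisymm (Nat.find_min' hex ⟨R, hR.ne_zero, hR.natDegree_le, le_rfl, hRP⟩)
  refine ⟨R, hR, ?_, hRP, fun U hU hUn hUh => ?_⟩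
  · by_contra! hle
    exact (hP.kabs_le R hR.ne_zero hR.natDegree_le hle).not_gt hRP
  · by_contra! hlt
    exact Nat.find_min hex (hRfind ▸ hUh) ⟨U, hU, hUn, le_rfl, hlt⟩

/-- A sequence of minimal polynomials of `ξ`: nonzero polynomials of degree at most `n`, with
increasing heights and decreasing values at `ξ`, each value being controlled by the next height
through Dirichlet's theorem. -/
structure IsMinimalSeq (n : ℕ) (ξ : K Fq) (P : ℕ → Fq[X][X]) : Prop where
  ne_zero : ∀ k, P k ≠ 0
  natDegree_le : ∀ k, (P k).natDegree ≤ n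
  heightDeg_strictMono : StrictMono fun k => heightDeg (P k)
  kabs_evalK_succ_lt : ∀ k, kabs Fq (evalK Fq (P (k + 1)) ξ) < kabs Fq (evalK Fq (P k) ξ)
  kabs_evalK_mul_le : ∀ k, kabs Fq (evalK Fq (P k) ξ) * Hpoly Fq (P (k + 1)) ^ n ≤ 1

lemma kabs_mul_Hpoly_pow_le_one {n : ℕ} {ξ : K Fq} (hξ : kabs Fq ξ ≤ 1) {R : Fq[X][X]} (hR : R ≠ 0)
    {c : ℝ} (hc : ∀ S : Fq[X][X], S ≠ 0 → S.natDegree ≤ n → heightDeg S < heightDeg R →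
      c ≤ kabs Fq (evalK Fq S ξ)) (hR0 : heightDeg R ≠ 0) :
    c * Hpoly Fq R ^ n ≤ 1 := by
  obtain ⟨h, hh⟩ := Nat.exists_eq_succ_of_ne_zero hR0
  obtain ⟨S, hS, hSn, hSh, hle⟩ := exists_kabs_evalK_le hξ n h
  have hq := qR_pos Fq
  calc c * Hpoly Fq R ^ n ≤ qR Fq ^ (-(n * h + n : ℤ)) * Hpoly Fq R ^ n := by
        have := (one_pos.trans_le (one_le_Hpoly hR)).le
        gcongr
        exact (hc S hS hSn (by lia)).trans hle
    _ = 1 := by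
      rw [Hpoly_eq_pow_heightDeg hR, hh, ← pow_mul, ← zpow_natCast, ← zpow_add₀ hq.ne']
      convert zpow_zero _
      push_cast
      ring

theorem exists_isMinimalSeq {ξ : K Fq} (hξ : kabs Fq ξ ≤ 1) {n : ℕ} (hn : 1 ≤ n)
    (hroot : NotRootOfDegreeLE n ξ) : ∃ P, IsMinimalSeq n ξ P := by
  choose! next hbest hheight hvalue hmin using
    fun (P : Fq[X][X]) (hP : IsBestApprox n ξ P) => hP.exists_next hξ hn hroot
  obtain ⟨P₀, hP₀, -⟩ := exists_isBestApprox_of_heightDeg_le ξ (one_ne_zero (α := Fq[X][X]))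
    (natDegree_one.trans_le n.zero_le) le_rfl
  have hP (k : ℕ) : IsBestApprox n ξ (next^[k] P₀) :=
    k.rec hP₀ fun k ih => Function.iterate_succ_apply' next k P₀ ▸ hbest _ ih
  refine ⟨fun k => next^[k] P₀, fun k => (hP k).ne_zero, fun k => (hP k).natDegree_le,
    strictMono_nat_of_lt_succ fun k => ?_, fun k => ?_, fun k => ?_⟩ <;>
    simp only [Function.iterate_succ_apply']
  · exact hheight _ (hP k)
  · exact hvalue _ (hP k)
  · exact kabs_mul_Hpoly_pow_le_one hξ (hbest _ (hP k)).ne_zero (hmin _ (hP k))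
      (hheight _ (hP k)).ne_bot

/-! ### The Davenport–Schmidt argument -/

section Minors

variable {R : Type*} [CommRing R]

/-- The `2 × 2` minor of the columns `f`, `g` in the rows `k`, `k + 1`. -/
def wedge (f g : ℕ → R) (k : ℕ) : R := f k * g (k + 1) - f (k + 1) * g k

/-- The `3 × 3` minor of the columns `f`, `g`, `h` in the rows `k`, `k + 1`, `k + 2`. -/
def triple (f g h : ℕ → R) (k : ℕ) : R :=
  f k * (g (k + 1) * h (k + 2) - g (k + 2) * h (k + 1)) -
    g k * (f (k + 1) * h (k + 2) - f (k + 2) * h (k + 1)) +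
    h k * (f (k + 1) * g (k + 2) - f (k + 2) * g (k + 1))

lemma mul_triple (l m a : ℕ → R) (k : ℕ) :
    l (k + 1) * triple l m a k =
      wedge l m k * wedge l a (k + 1) - wedge l m (k + 1) * wedge l a k := by
  simp only [triple, wedge]
  ring

end Minors

section FlatSequences

variable {R : Type*} [Field R] {v : AbsoluteValue R ℝ}

lemma map_sub_lt (hv : IsNonarchimedean v) {x y : R} {c : ℝ} (hx : v x < c) (hy : v y < c) :
    v (x - y) < c :=
  (map_sub_le_max hv x y).trans_lt (max_lt hx hy)

lemma map_add_lt (hv : IsNonarchimedean v) {x y : R} {c : ℝ} (hx : v x < c) (hy : v y < c) :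
    v (x + y) < c :=
  (hv x y).trans_lt (max_lt hx hy)

lemma map_sub_eq_left (hv : IsNonarchimedean v) {x y : R} (h : v y < v x) : v (x - y) = v x := by
  rw [sub_eq_add_neg]
  exact hv.add_eq_left_of_lt (by rwa [map_neg_eq_map])

/-- The sequences `l k = P_k(ξ)`, `m k = P_k'(ξ)`, `a k` (leading coefficient) and
`x k = H(P_k)` attached to quadratic minimal polynomials `P_k` of a point `ξ`, under the
assumption (to be refuted) that `|P_k'(ξ)| < |P_k(ξ)| H(P_k) ^ (3 - η)` for all `k`. -/
structure IsFlatSeq (v : AbsoluteValue R ℝ) (η : ℝ) (l m a : ℕ → R) (x : ℕ → ℝ) : Prop where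
  map_value_pos : ∀ k, 0 < v (l k)
  map_value_succ_lt : ∀ k, v (l (k + 1)) < v (l k)
  one_le_height : ∀ k, 1 ≤ x k
  height_lt_succ : ∀ k, x k < x (k + 1)
  map_value_mul_sq_le : ∀ k, v (l k) * x (k + 1) ^ 2 ≤ 1
  map_deriv_lt : ∀ k, v (m k) < v (l k) * x k ^ (3 - η)
  map_lead : ∀ k, v (a k) = x k
  tendsto_height : Tendsto x atTop atTop

namespace IsFlatSeq

variable {η : ℝ} {l m a : ℕ → R} {x : ℕ → ℝ}

lemma height_pos (h : IsFlatSeq v η l m a x) (k : ℕ) : 0 < x k :=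
  one_pos.trans_le (h.one_le_height k)

lemma map_deriv_lt_cube (h : IsFlatSeq v η l m a x) (hη : 0 ≤ η) (k : ℕ) :
    v (m k) < v (l k) * x k ^ 3 := by
  refine (h.map_deriv_lt k).trans_le (mul_le_mul_of_nonneg_left ?_ (h.map_value_pos k).le)
  rw [← Real.rpow_natCast]
  exact Real.rpow_le_rpow_of_exponent_le (h.one_le_height k) (by push_cast; linarith)

lemma strictMono_height (h : IsFlatSeq v η l m a x) : StrictMono x :=
  strictMono_nat_of_lt_succ h.height_lt_succ

lemma map_value_mul_lt_one (h : IsFlatSeq v η l m a x) {i j k : ℕ} (hi : i ≤ k) (hj : j ≤ k + 1) :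
    v (l k) * (x i * x j) < 1 := by
  refine lt_of_lt_of_le (mul_lt_mul_of_pos_left ?_ (h.map_value_pos k)) (h.map_value_mul_sq_le k)
  calc x i * x j < x (k + 1) * x j :=
        mul_lt_mul_of_pos_right (h.strictMono_height (Nat.lt_succ_of_le hi)) (h.height_pos j)
    _ ≤ x (k + 1) * x (k + 1) :=
        mul_le_mul_of_nonneg_left (h.strictMono_height.monotone hj) (h.height_pos _).le
    _ = x (k + 1) ^ 2 := (sq _).symm

lemma map_deriv_lt_height (h : IsFlatSeq v η l m a x) (hη : 0 ≤ η) (k : ℕ) : v (m k) < x k := by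
  have := h.height_pos k
  calc v (m k) < v (l k) * x k ^ 3 := h.map_deriv_lt_cube hη k
    _ = v (l k) * (x k * x k) * x k := by ring
    _ ≤ 1 * x k := by
      gcongr
      exact (h.map_value_mul_lt_one le_rfl k.le_succ).le
    _ = x k := one_mul _

lemma map_wedge_lead (h : IsFlatSeq v η l m a x) (hv : IsNonarchimedean v) (k : ℕ) :
    v (wedge l a k) = v (l k) * x (k + 1) := by
  have hlt : v (l (k + 1) * a k) < v (l k * a (k + 1)) := by
    rw [map_mul, map_mul, h.map_lead, h.map_lead]
    exact mul_lt_mul'' (h.map_value_succ_lt k) (h.height_lt_succ k) (v.nonneg _)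
      (h.height_pos k).le
  rw [wedge, map_sub_eq_left hv hlt, map_mul, h.map_lead]

lemma map_wedge_lead_pos (h : IsFlatSeq v η l m a x) (hv : IsNonarchimedean v) (k : ℕ) :
    0 < v (wedge l a k) :=
  h.map_wedge_lead hv k ▸ mul_pos (h.map_value_pos k) (h.height_pos _)

lemma map_wedge_deriv_lt (h : IsFlatSeq v η l m a x) (hv : IsNonarchimedean v) (hη3 : η ≤ 3)
    (k : ℕ) : v (wedge l m k) < v (l k) * v (l (k + 1)) * x (k + 1) ^ (3 - η) := by
  refine map_sub_lt hv ?_ ?_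
  · rw [map_mul, mul_assoc]
    exact mul_lt_mul_of_pos_left (h.map_deriv_lt _) (h.map_value_pos k)
  · have hle : x k ^ (3 - η) ≤ x (k + 1) ^ (3 - η) :=
      Real.rpow_le_rpow (h.height_pos k).le (h.height_lt_succ k).le (by linarith)
    calc v (l (k + 1) * m k) = v (l (k + 1)) * v (m k) := map_mul _ _ _
      _ < v (l (k + 1)) * (v (l k) * x k ^ (3 - η)) :=
        mul_lt_mul_of_pos_left (h.map_deriv_lt k) (h.map_value_pos _)
      _ ≤ v (l (k + 1)) * (v (l k) * x (k + 1) ^ (3 - η)) := by gcongr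
      _ = v (l k) * v (l (k + 1)) * x (k + 1) ^ (3 - η) := by ring

lemma map_wedge_deriv_lt_cube (h : IsFlatSeq v η l m a x) (hv : IsNonarchimedean v) (hη : 0 ≤ η)
    (hη3 : η ≤ 3) (k : ℕ) : v (wedge l m k) < v (l k) * v (l (k + 1)) * x (k + 1) ^ 3 := by
  refine (h.map_wedge_deriv_lt hv hη3 k).trans_le ?_
  gcongr
  rw [← Real.rpow_natCast]
  exact Real.rpow_le_rpow_of_exponent_le (h.one_le_height _) (by push_cast; linarith)

/- In the expansion of the determinant `triple l m a k`, every term except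
`-(l k * a (k + 1) * m (k + 2))` is small. -/
lemma map_triple_add_lt_one (h : IsFlatSeq v η l m a x) (hv : IsNonarchimedean v) (hη : 0 ≤ η)
    (hη3 : η ≤ 3) (k : ℕ) : v (triple l m a k + l k * a (k + 1) * m (k + 2)) < 1 := by
  have hpos := h.height_pos
  have hfst : v (wedge l m k * a (k + 2)) < 1 := by
    rw [map_mul, h.map_lead]
    calc v (wedge l m k) * x (k + 2)
        ≤ v (l k) * v (l (k + 1)) * x (k + 1) ^ 3 * x (k + 2) :=
          mul_le_mul_of_nonneg_right (h.map_wedge_deriv_lt_cube hv hη hη3 k).le (hpos _).le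
      _ = v (l k) * x (k + 1) ^ 2 * (v (l (k + 1)) * (x (k + 1) * x (k + 2))) := by ring
      _ < 1 := mul_lt_one_of_nonneg_of_lt_one_right (h.map_value_mul_sq_le k)
          (mul_nonneg (v.nonneg _) (mul_pos (hpos _) (hpos _)).le)
          (h.map_value_mul_lt_one le_rfl le_rfl)
  have hsnd : v (a k * wedge l m (k + 1)) < 1 := by
    rw [map_mul, h.map_lead]
    calc x k * v (wedge l m (k + 1))
        ≤ x k * (v (l (k + 1)) * v (l (k + 2)) * x (k + 2) ^ 3) :=
          mul_le_mul_of_nonneg_left (h.map_wedge_deriv_lt_cube hv hη hη3 _).le (hpos _).le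
      _ = v (l (k + 1)) * x (k + 2) ^ 2 * (v (l (k + 2)) * (x k * x (k + 2))) := by ring
      _ < 1 := mul_lt_one_of_nonneg_of_lt_one_right (h.map_value_mul_sq_le _)
          (mul_nonneg (v.nonneg _) (mul_pos (hpos _) (hpos _)).le)
          (h.map_value_mul_lt_one (by lia) (by lia))
  have htrd : v (m k * a (k + 1) * l (k + 2)) < 1 := by
    rw [map_mul, map_mul, h.map_lead]
    calc v (m k) * x (k + 1) * v (l (k + 2)) ≤ x k * x (k + 1) * v (l (k + 2)) := by
          have := hpos (k + 1)
          gcongr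
          exact (h.map_deriv_lt_height hη k).le
      _ = v (l (k + 2)) * (x k * x (k + 1)) := mul_comm _ _
      _ < 1 := h.map_value_mul_lt_one (by lia) (by lia)
  have hexpand : triple l m a k + l k * a (k + 1) * m (k + 2) =
      wedge l m k * a (k + 2) + a k * wedge l m (k + 1) + m k * a (k + 1) * l (k + 2) := by
    simp only [triple, wedge]
    ring
  exact hexpand ▸ map_add_lt hv (map_add_lt hv hfst hsnd) htrd

lemma height_le_map_deriv (h : IsFlatSeq v η l m a x) (hv : IsNonarchimedean v) (hη : 0 ≤ η)
    (hη3 : η ≤ 3) {k : ℕ} (hdet : 1 ≤ v (triple l m a k)) : x (k + 1) ≤ v (m (k + 2)) := by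
  by_contra! hlt
  have hmain : v (l k * a (k + 1) * m (k + 2)) < 1 := by
    rw [map_mul, map_mul, h.map_lead]
    calc v (l k) * x (k + 1) * v (m (k + 2)) < v (l k) * x (k + 1) * x (k + 1) :=
          mul_lt_mul_of_pos_left hlt (mul_pos (h.map_value_pos k) (h.height_pos _))
      _ = v (l k) * x (k + 1) ^ 2 := by ring
      _ ≤ 1 := h.map_value_mul_sq_le k
  have hsmall := map_sub_lt hv (h.map_triple_add_lt_one hv hη hη3 k) hmain
  rw [add_sub_cancel_right] at hsmall
  exact hdet.not_gt hsmall

lemma map_wedge_deriv_mul_le (h : IsFlatSeq v η l m a x) (hv : IsNonarchimedean v) (hη : 0 ≤ η)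
    (hη3 : η ≤ 3) {k : ℕ} (hdet : triple l m a k = 0 ∨ 1 ≤ v (triple l m a k)) :
    v (wedge l m k) * v (wedge l a (k + 1)) ≤ v (wedge l m (k + 1)) * v (wedge l a k) := by
  rcases hdet with hdet | hdet
  · have heq := mul_triple l m a k
    rw [hdet, mul_zero] at heq
    rw [← map_mul, ← map_mul, sub_eq_zero.mp heq.symm]
  have hm := h.height_le_map_deriv hv hη hη3 hdet
  have hlt : v (l (k + 2) * m (k + 1)) < v (l (k + 1) * m (k + 2)) := by
    rw [map_mul, map_mul]
    exact mul_lt_mul'' (h.map_value_succ_lt _) ((h.map_deriv_lt_height hη _).trans_le hm)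
      (v.nonneg _) (v.nonneg _)
  rw [h.map_wedge_lead hv, h.map_wedge_lead hv, wedge.eq_1 l m (k + 1), map_sub_eq_left hv hlt,
    map_mul]
  have hpos := h.height_pos
  have hpos1 := hpos (k + 1)
  calc v (wedge l m k) * (v (l (k + 1)) * x (k + 2))
      ≤ v (l k) * v (l (k + 1)) * x (k + 1) ^ 3 * (v (l (k + 1)) * x (k + 2)) :=
        mul_le_mul_of_nonneg_right (h.map_wedge_deriv_lt_cube hv hη hη3 k).le
          (mul_nonneg (v.nonneg _) (hpos _).le)
    _ = v (l k) * v (l (k + 1)) * x (k + 1) * x (k + 1) *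
          (v (l (k + 1)) * (x (k + 1) * x (k + 2))) := by ring
    _ ≤ v (l k) * v (l (k + 1)) * x (k + 1) * v (m (k + 2)) * 1 := by
        gcongr
        · exact mul_nonneg (v.nonneg _) (mul_pos hpos1 (hpos _)).le
        · exact (h.map_value_mul_lt_one le_rfl le_rfl).le
    _ = v (l (k + 1)) * v (m (k + 2)) * (v (l k) * x (k + 1)) := by ring

lemma map_wedge_div_le (h : IsFlatSeq v η l m a x) (hv : IsNonarchimedean v) (hη3 : η ≤ 3)
    (k : ℕ) : v (wedge l m k) / v (wedge l a k) ≤ x (k + 1) ^ (-η) := by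
  have hpos := h.height_pos (k + 1)
  rw [div_le_iff₀ (h.map_wedge_lead_pos hv k), h.map_wedge_lead hv]
  calc v (wedge l m k) ≤ v (l k) * v (l (k + 1)) * x (k + 1) ^ (3 - η) :=
        (h.map_wedge_deriv_lt hv hη3 k).le
    _ = x (k + 1) ^ (-η) * (v (l k) * x (k + 1)) *
          (v (l (k + 1)) * (x (k + 1) * x (k + 1))) := by
      rw [show 3 - η = -η + (3 : ℕ) by push_cast; ring, Real.rpow_add_natCast hpos.ne']
      ring
    _ ≤ x (k + 1) ^ (-η) * (v (l k) * x (k + 1)) * 1 := by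
      gcongr
      exact (h.map_value_mul_lt_one le_rfl (by lia)).le
    _ = x (k + 1) ^ (-η) * (v (l k) * x (k + 1)) := mul_one _

lemma wedge_deriv_eq_zero (h : IsFlatSeq v η l m a x) (hv : IsNonarchimedean v) (hη : 0 < η)
    (hη3 : η ≤ 3) (hdet : ∀ k, triple l m a k = 0 ∨ 1 ≤ v (triple l m a k)) (k : ℕ) :
    wedge l m k = 0 := by
  have hpos := h.map_wedge_lead_pos hv
  have hmono : Monotone fun k => v (wedge l m k) / v (wedge l a k) :=
    monotone_nat_of_le_succ fun k => (div_le_div_iff₀ (hpos k) (hpos (k + 1))).mpr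
      (h.map_wedge_deriv_mul_le hv hη.le hη3 (hdet k))
  have hbound : Tendsto (fun k => x (k + 1) ^ (-η)) atTop (nhds 0) :=
    (tendsto_rpow_neg_atTop hη).comp (h.tendsto_height.comp (tendsto_add_atTop_nat 1))
  have hlim : Tendsto (fun k => v (wedge l m k) / v (wedge l a k)) atTop (nhds 0) :=
    squeeze_zero (fun k => div_nonneg (v.nonneg _) (v.nonneg _)) (h.map_wedge_div_le hv hη3) hbound
  exact v.nonpos_iff.mp (by simpa using (div_le_iff₀ (hpos k)).mp (hmono.ge_of_tendsto hlim k))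

lemma exists_deriv_eq_mul (h : IsFlatSeq v η l m a x) (hv : IsNonarchimedean v) (hη : 0 < η)
    (hη3 : η ≤ 3) (hdet : ∀ k, triple l m a k = 0 ∨ 1 ≤ v (triple l m a k)) :
    ∃ r, ∀ k, m k = r * l k := by
  have hl (k : ℕ) : l k ≠ 0 := v.pos_iff.mp (h.map_value_pos k)
  refine ⟨m 0 / l 0, fun k => ?_⟩
  induction k with
  | zero => exact (div_mul_cancel₀ _ (hl 0)).symm
  | succ k ih =>
    have hwedge := h.wedge_deriv_eq_zero hv hη hη3 hdet k
    rw [wedge, ih] at hwedge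
    exact mul_left_cancel₀ (hl k) (by linear_combination hwedge)

lemma tendsto_map_wedge_lead (h : IsFlatSeq v η l m a x) (hv : IsNonarchimedean v) :
    Tendsto (fun k => v (wedge l a k)) atTop (nhds 0) := by
  refine squeeze_zero (fun k => v.nonneg _) (fun k => ?_)
    (tendsto_inv_atTop_zero.comp (h.tendsto_height.comp (tendsto_add_atTop_nat 1)))
  have hpos := h.height_pos (k + 1)
  rw [h.map_wedge_lead hv, Function.comp_apply, Function.comp_apply, ← one_div,
    le_div_iff₀ hpos, mul_assoc, ← sq]
  exact h.map_value_mul_sq_le k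

end IsFlatSeq

end FlatSequences

section QuadraticCoefficients

variable {F : Type} [Field F]

lemma evalK_eq_of_natDegree_le_two {P : F[X][X]} (hP : P.natDegree ≤ 2) (ξ : K F) :
    evalK F P ξ = polyToK F (P.coeff 2) * ξ ^ 2 + polyToK F (P.coeff 1) * ξ +
      polyToK F (P.coeff 0) := by
  rw [evalK, eval₂_eq_sum_range' _ (Nat.lt_succ_of_le hP)]
  simp only [Nat.succ_eq_add_one, Nat.reduceAdd, Finset.sum_range_succ, Finset.range_zero,
    Finset.sum_empty, zero_add, pow_zero, mul_one, pow_one]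
  ring

lemma evalK_derivative_eq_of_natDegree_le_two {P : F[X][X]} (hP : P.natDegree ≤ 2) (ξ : K F) :
    evalK F (derivative P) ξ = 2 * polyToK F (P.coeff 2) * ξ + polyToK F (P.coeff 1) := by
  have hdeg : (derivative P).natDegree < 2 := (natDegree_derivative_le P).trans_lt (by lia)
  rw [evalK, eval₂_eq_sum_range' _ hdeg]
  simp only [coeff_derivative, map_mul, map_add, map_natCast, map_one, Nat.cast_zero, Nat.cast_one,
    Finset.sum_range_succ, Finset.range_zero, Finset.sum_empty, zero_add, pow_zero, mul_one,
    pow_one]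
  ring

lemma triple_map {R S : Type*} [CommRing R] [CommRing S] (ι : R →+* S) (f g h : ℕ → R) (k : ℕ) :
    triple (fun i => ι (f i)) (fun i => ι (g i)) (fun i => ι (h i)) k = ι (triple f g h k) := by
  simp only [triple, map_add, map_sub, map_mul]

lemma wedge_map {R S : Type*} [CommRing R] [CommRing S] (ι : R →+* S) (f g : ℕ → R) (k : ℕ) :
    wedge (fun i => ι (f i)) (fun i => ι (g i)) k = ι (wedge f g k) := by
  simp only [wedge, map_sub, map_mul]

/- The map from coefficients to `(P(ξ), P'(ξ), P.coeff 2)` is unimodular. -/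
lemma triple_evalK {P : ℕ → F[X][X]} (hP : ∀ k, (P k).natDegree ≤ 2) (ξ : K F) (k : ℕ) :
    triple (fun k => evalK F (P k) ξ) (fun k => evalK F (derivative (P k)) ξ)
        (fun k => polyToK F ((P k).coeff 2)) k =
      polyToK F (triple (fun k => (P k).coeff 0) (fun k => (P k).coeff 1)
        (fun k => (P k).coeff 2) k) := by
  rw [← triple_map]
  simp only [triple, evalK_eq_of_natDegree_le_two (hP _),
    evalK_derivative_eq_of_natDegree_le_two (hP _)]
  ring

lemma polyToK_wedge_coeff_two_one {P : ℕ → F[X][X]} (hP : ∀ k, (P k).natDegree ≤ 2) {ξ r : K F}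
    (hr : ∀ k, evalK F (derivative (P k)) ξ = r * evalK F (P k) ξ) (k : ℕ) :
    polyToK F (wedge (fun k => (P k).coeff 2) (fun k => (P k).coeff 1) k) =
      -(r * wedge (fun k => evalK F (P k) ξ) (fun k => polyToK F ((P k).coeff 2)) k) := by
  simp only [evalK_derivative_eq_of_natDegree_le_two (hP _)] at hr
  rw [← wedge_map]
  simp only [wedge]
  linear_combination polyToK F ((P k).coeff 2) * hr (k + 1) -
    polyToK F ((P (k + 1)).coeff 2) * hr k

lemma polyToK_wedge_coeff_two_zero {P : ℕ → F[X][X]} (hP : ∀ k, (P k).natDegree ≤ 2) (ξ : K F)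
    {k : ℕ} (hminor : wedge (fun k => (P k).coeff 2) (fun k => (P k).coeff 1) k = 0) :
    polyToK F (wedge (fun k => (P k).coeff 2) (fun k => (P k).coeff 0) k) =
      -wedge (fun k => evalK F (P k) ξ) (fun k => polyToK F ((P k).coeff 2)) k := by
  have hmap := hminor ▸ wedge_map (polyToK F) (fun k => (P k).coeff 2) (fun k => (P k).coeff 1) k
  rw [map_zero] at hmap
  rw [← wedge_map]
  simp only [wedge, evalK_eq_of_natDegree_le_two (hP _)] at hmap ⊢
  linear_combination -ξ * hmap

end QuadraticCoefficients

lemma kabs_coeff_two_eq_Hpoly {ξ : K Fq} (hξ : kabs Fq ξ ≤ 1) {P : Fq[X][X]}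
    (hP : P.natDegree ≤ 2) (h0 : kabs Fq (evalK Fq P ξ) < Hpoly Fq P)
    (h1 : kabs Fq (evalK Fq (derivative P) ξ) < Hpoly Fq P) :
    kabs Fq (polyToK Fq (P.coeff 2)) = Hpoly Fq P := by
  refine (kabs_coeff_le_Hpoly P 2).antisymm (le_of_not_gt fun h2 => ?_)
  have hmul {f : K Fq} {c : ℝ} (hf : kabs Fq f < c) : kabs Fq (f * ξ) < c := by
    rw [kabs_mul]
    exact (mul_le_of_le_one_right (kabs_nonneg f) hξ).trans_lt hf
  have hna := isNonarchimedean_kabsAbv Fq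
  have hb : kabs Fq (polyToK Fq (P.coeff 1)) < Hpoly Fq P := by
    have heq : polyToK Fq (P.coeff 1) = evalK Fq (derivative P) ξ -
        (polyToK Fq (P.coeff 2) + polyToK Fq (P.coeff 2)) * ξ := by
      rw [evalK_derivative_eq_of_natDegree_le_two hP]
      ring
    exact heq ▸ map_sub_lt hna h1 (hmul (map_add_lt hna h2 h2))
  have hc : kabs Fq (polyToK Fq (P.coeff 0)) < Hpoly Fq P := by
    have heq : polyToK Fq (P.coeff 0) = evalK Fq P ξ -
        (polyToK Fq (P.coeff 2) * ξ + polyToK Fq (P.coeff 1)) * ξ := by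
      rw [evalK_eq_of_natDegree_le_two hP]
      ring
    exact heq ▸ map_sub_lt hna h0 (hmul (map_add_lt hna (hmul h2) hb))
  refine (max_lt h2 (max_lt hb hc)).not_ge (Hpoly_le fun i => ?_)
  match i with
  | 0 => exact le_max_of_le_right (le_max_right _ _)
  | 1 => exact le_max_of_le_right (le_max_left _ _)
  | 2 => exact le_max_left _ _
  | i + 3 =>
    rw [coeff_eq_zero_of_natDegree_lt (by lia), map_zero, kabs_zero]
    exact le_max_of_le_left (kabs_nonneg _)

namespace IsMinimalSeq

variable {ξ : K Fq} {P : ℕ → Fq[X][X]}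

lemma comp_add {n : ℕ} (hP : IsMinimalSeq n ξ P) (N : ℕ) :
    IsMinimalSeq n ξ fun k => P (k + N) where
  ne_zero k := hP.ne_zero _
  natDegree_le k := hP.natDegree_le _
  heightDeg_strictMono := hP.heightDeg_strictMono.comp (strictMono_id.add_const N)
  kabs_evalK_succ_lt k := by simpa only [add_right_comm] using hP.kabs_evalK_succ_lt (k + N)
  kabs_evalK_mul_le k := by simpa only [add_right_comm] using hP.kabs_evalK_mul_le (k + N)

lemma Hpoly_strictMono {n : ℕ} (hP : IsMinimalSeq n ξ P) : StrictMono fun k => Hpoly Fq (P k) := by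
  simp only [Hpoly_eq_pow_heightDeg (hP.ne_zero _)]
  exact (pow_right_strictMono₀ (one_lt_qR Fq)).comp hP.heightDeg_strictMono

lemma tendsto_Hpoly {n : ℕ} (hP : IsMinimalSeq n ξ P) :
    Tendsto (fun k => Hpoly Fq (P k)) atTop atTop := by
  simp only [Hpoly_eq_pow_heightDeg (hP.ne_zero _)]
  exact (tendsto_pow_atTop_atTop_of_one_lt (one_lt_qR Fq)).comp
    hP.heightDeg_strictMono.tendsto_atTop

lemma isFlatSeq (hP : IsMinimalSeq 2 ξ P) (hξ : kabs Fq ξ ≤ 1) {η : ℝ} (hη : 0 ≤ η)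
    (hflat : ∀ k, kabs Fq (evalK Fq (derivative (P k)) ξ) <
      kabs Fq (evalK Fq (P k) ξ) * Hpoly Fq (P k) ^ (3 - η)) :
    IsFlatSeq (kabsAbv Fq) η (fun k => evalK Fq (P k) ξ) (fun k => evalK Fq (derivative (P k)) ξ)
      (fun k => polyToK Fq ((P k).coeff 2)) (fun k => Hpoly Fq (P k)) where
  map_value_pos k := (kabs_nonneg _).trans_lt (hP.kabs_evalK_succ_lt k)
  map_value_succ_lt := hP.kabs_evalK_succ_lt
  one_le_height k := one_le_Hpoly (hP.ne_zero k)
  height_lt_succ k := hP.Hpoly_strictMono k.lt_succ_self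
  map_value_mul_sq_le := hP.kabs_evalK_mul_le
  map_deriv_lt := hflat
  map_lead k := by
    have hH : 1 ≤ Hpoly Fq (P k) := one_le_Hpoly (hP.ne_zero k)
    have hpos : 0 < kabs Fq (evalK Fq (P k) ξ) :=
      (kabs_nonneg _).trans_lt (hP.kabs_evalK_succ_lt k)
    have hlt : kabs Fq (evalK Fq (P k) ξ) * Hpoly Fq (P k) ^ 2 < 1 := by
      refine lt_of_lt_of_le ?_ (hP.kabs_evalK_mul_le k)
      have := hP.Hpoly_strictMono k.lt_succ_self
      gcongr
    refine kabs_coeff_two_eq_Hpoly hξ (hP.natDegree_le k) ?_ ((hflat k).trans ?_)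
    · refine lt_of_lt_of_le ?_ hH
      exact (le_mul_of_one_le_right hpos.le (one_le_pow₀ hH)).trans_lt hlt
    · calc kabs Fq (evalK Fq (P k) ξ) * Hpoly Fq (P k) ^ (3 - η)
          ≤ kabs Fq (evalK Fq (P k) ξ) * Hpoly Fq (P k) ^ (3 : ℝ) := by
            gcongr
            linarith
        _ = kabs Fq (evalK Fq (P k) ξ) * Hpoly Fq (P k) ^ 2 * Hpoly Fq (P k) := by
            rw [show (3 : ℝ) = (3 : ℕ) by norm_num, Real.rpow_natCast]
            ring
        _ < Hpoly Fq (P k) := mul_lt_of_lt_one_left (by linarith) hlt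
  tendsto_height := hP.tendsto_Hpoly

lemma exists_le_kabs_derivative (hP : IsMinimalSeq 2 ξ P) (hξ : kabs Fq ξ ≤ 1) {η : ℝ} (hη : 0 < η)
    (hη3 : η ≤ 3) :
    ∃ k, kabs Fq (evalK Fq (P k) ξ) * Hpoly Fq (P k) ^ (3 - η) ≤
      kabs Fq (evalK Fq (derivative (P k)) ξ) := by
  by_contra! hflat
  have h := hP.isFlatSeq hξ hη.le hflat
  have hna := isNonarchimedean_kabsAbv Fq
  obtain ⟨r, hr⟩ := h.exists_deriv_eq_mul hna hη hη3 fun k => by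
    rw [triple_evalK hP.natDegree_le]
    exact (eq_or_ne _ 0).imp (fun h0 => by rw [h0, map_zero]) one_le_kabs_polyToK
  have hlim := h.tendsto_map_wedge_lead hna
  have hrlim := hlim.const_mul (kabs Fq r)
  rw [mul_zero] at hrlim
  obtain ⟨k, hk, hrk⟩ := ((hlim.eventually_lt_const one_pos).and
    (hrlim.eventually_lt_const one_pos)).exists
  have hminor : wedge (fun k => (P k).coeff 2) (fun k => (P k).coeff 1) k = 0 :=
    eq_zero_of_kabs_polyToK_lt_one <| by
      rwa [polyToK_wedge_coeff_two_one hP.natDegree_le hr, kabs_neg, kabs_mul]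
  have hwedge := polyToK_wedge_coeff_two_zero hP.natDegree_le ξ hminor
  have hminor' : wedge (fun k => (P k).coeff 2) (fun k => (P k).coeff 0) k = 0 :=
    eq_zero_of_kabs_polyToK_lt_one (by rwa [hwedge, kabs_neg])
  rw [hminor', map_zero, eq_comm, neg_eq_zero] at hwedge
  exact (h.map_wedge_lead_pos hna k).ne' (by rw [hwedge, map_zero])

end IsMinimalSeq

theorem natCast_le_wExp {n : ℕ} (hn : 1 ≤ n) {ξ : K Fq} (hξ : kabs Fq ξ ≤ 1)
    (hroot : NotRootOfDegreeLE n ξ) : (n : EReal) ≤ wExp Fq n ξ := by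
  obtain ⟨P, hP⟩ := exists_isMinimalSeq hξ hn hroot
  have hle k : kabs Fq (evalK Fq (P k) ξ) ≤ Hpoly Fq (P k) ^ (-(n : ℝ)) := by
    have hH : 0 < Hpoly Fq (P k) := one_pos.trans_le (one_le_Hpoly (hP.ne_zero k))
    rw [Real.rpow_neg hH.le, Real.rpow_natCast, ← one_div, le_div_iff₀ (pow_pos hH n)]
    refine le_trans ?_ (hP.kabs_evalK_mul_le k)
    have := kabs_nonneg (evalK Fq (P k) ξ)
    have := (hP.Hpoly_strictMono k.lt_succ_self).le
    gcongr
  have hlim : Tendsto (fun k => Hpoly Fq (P k) ^ (-(n : ℝ))) atTop (nhds 0) :=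
    (tendsto_rpow_neg_atTop (Nat.cast_pos.2 hn)).comp hP.tendsto_Hpoly
  have hcoe : ((n : ℝ) : EReal) ≤ wExp Fq n ξ := coe_le_wExp fun δ hδ => by
    obtain ⟨k, hk⟩ := (hlim.eventually_lt_const hδ).exists
    exact ⟨P k, hP.natDegree_le k, hroot _ (hP.ne_zero k) (hP.natDegree_le k),
      (hle k).trans_lt hk, hle k⟩
  exact_mod_cast hcoe

theorem two_le_wStarExp {v : L Fq → ℝ} (hv : IsAbsExt Fq v) {ξ : K Fq} (hξ : kabs Fq ξ ≤ 1)
    (hroot : NotRootOfDegreeLE 2 ξ) : 2 ≤ wStarExp Fq v 2 ξ := by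
  obtain ⟨P, hP⟩ := exists_isMinimalSeq hξ one_le_two hroot
  refine le_of_forall_lt fun c hc => ?_
  obtain ⟨w, hcw, hw2⟩ := EReal.lt_iff_exists_real_btwn.1 hc
  replace hw2 : w < 2 := EReal.coe_lt_coe_iff.1 hw2
  refine (hcw.trans_le (EReal.coe_le_coe (le_max_left w 0))).trans_le ?_
  have hw0 := le_max_right w 0
  generalize hu : max w 0 = u at hw0 ⊢
  have hu2 : u < 2 := hu ▸ max_lt hw2 two_pos
  refine coe_le_wStarExp hv (by linarith) fun δ hδ => ?_
  have hlim : Tendsto (fun k => Hpoly Fq (P k) ^ (-u - 1)) atTop (nhds 0) := by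
    simp only [← neg_add']
    exact (tendsto_rpow_neg_atTop (by linarith)).comp hP.tendsto_Hpoly
  obtain ⟨N, hN⟩ := eventually_atTop.1 (hlim.eventually_lt_const hδ)
  obtain ⟨k, hk⟩ := (hP.comp_add N).exists_le_kabs_derivative hξ
    (sub_pos.2 hu2) (by linarith)
  have hne := hroot _ (hP.ne_zero (k + N)) (hP.natDegree_le _)
  have hH : 0 < Hpoly Fq (P (k + N)) := one_pos.trans_le (one_le_Hpoly (hP.ne_zero _))
  have hpos : 0 < kabs Fq (evalK Fq (derivative (P (k + N))) ξ) :=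
    lt_of_lt_of_le (mul_pos (kabs_pos.2 hne) (Real.rpow_pos_of_pos hH _)) hk
  have hle : kabs Fq (evalK Fq (P (k + N)) ξ) / kabs Fq (evalK Fq (derivative (P (k + N))) ξ) ≤
      Hpoly Fq (P (k + N)) ^ (-u - 1) := by
    rw [div_le_iff₀ hpos, show -u - 1 = -(3 - (2 - u)) by ring, Real.rpow_neg hH.le,
      ← div_eq_inv_mul, le_div_iff₀ (Real.rpow_pos_of_pos hH _)]
    exact hk
  exact ⟨P (k + N), hP.natDegree_le _, hne, kabs_pos.1 hpos, hle.trans_lt (hN _ (N.le_add_left k)),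
    hle⟩

/-! ### Continued fractions -/

section Recursion

variable {F : Type} [Field F]

/-- The denominator `q_{n-1}` of the convergents of `[0; b 0, b 1, …]`, with `q_{-1} = 0`. -/
abbrev cfDen (b : ℕ → F[X]) (n : ℕ) : F[X] := qSeq F (cfA F b) n

/-- The numerator `p_{n-1}` of the convergents of `[0; b 0, b 1, …]`, with `p_{-1} = 1`. -/
abbrev cfNum (b : ℕ → F[X]) (n : ℕ) : F[X] := pSeq F (cfA F b) n

/-- The degree of the denominator `q_n = cfDen b (n + 1)`. -/
def cfDeg (b : ℕ → F[X]) (n : ℕ) : ℕ := ∑ i ∈ Finset.range n, (b i).natDegree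

/-- The signed error `q_{n-1} ξ - p_{n-1}` of the convergents. The complete quotients of `ξ` are,
up to sign, the ratios `cfErr ξ b n / cfErr ξ b (n + 1)`. -/
def cfErr (ξ : K F) (b : ℕ → F[X]) (n : ℕ) : K F :=
  polyToK F (cfDen b n) * ξ - polyToK F (cfNum b n)

variable {b : ℕ → F[X]} {ξ : K F}

lemma cfDen_add_two (b : ℕ → F[X]) (n : ℕ) :
    cfDen b (n + 2) = b n * cfDen b (n + 1) + cfDen b n := by
  simp [qSeq, cfA]

lemma cfNum_add_two (b : ℕ → F[X]) (n : ℕ) :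
    cfNum b (n + 2) = b n * cfNum b (n + 1) + cfNum b n := by
  simp [pSeq, cfA]

lemma cfErr_add_two (ξ : K F) (b : ℕ → F[X]) (n : ℕ) :
    cfErr ξ b (n + 2) = polyToK F (b n) * cfErr ξ b (n + 1) + cfErr ξ b n := by
  simp only [cfErr, cfDen_add_two, cfNum_add_two, map_add, map_mul]
  ring

lemma cfErr_zero (ξ : K F) (b : ℕ → F[X]) : cfErr ξ b 0 = -1 := by
  simp [cfErr, qSeq, pSeq]

lemma cfErr_one (ξ : K F) (b : ℕ → F[X]) : cfErr ξ b 1 = ξ := by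
  simp [cfErr, qSeq, pSeq, cfA]

lemma cfNum_mul_cfDen_sub (b : ℕ → F[X]) (n : ℕ) :
    cfNum b (n + 1) * cfDen b n - cfNum b n * cfDen b (n + 1) = (-1) ^ (n + 1) := by
  induction n with
  | zero => simp [qSeq, pSeq, cfA]
  | succ n ih =>
    rw [cfNum_add_two, cfDen_add_two, pow_succ, ← ih]
    ring

lemma cfDeg_succ (b : ℕ → F[X]) (n : ℕ) : cfDeg b (n + 1) = cfDeg b n + (b n).natDegree :=
  Finset.sum_range_succ _ _

lemma cfDeg_strictMono (hb : ∀ n, 1 ≤ (b n).natDegree) : StrictMono (cfDeg b) :=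
  strictMono_nat_of_lt_succ fun n => by
    rw [cfDeg_succ]
    exact Nat.lt_add_of_pos_right (hb n)

end Recursion

section Convergents

variable {b : ℕ → Fq[X]} {ξ : K Fq}

lemma kabs_cfDen_succ_and_lt (hb : ∀ n, 1 ≤ (b n).natDegree) (n : ℕ) :
    kabs Fq (polyToK Fq (cfDen b (n + 1))) = qR Fq ^ cfDeg b n ∧
      kabs Fq (polyToK Fq (cfDen b n)) < qR Fq ^ cfDeg b n := by
  induction n with
  | zero => simp [qSeq, cfDeg, kabs_one, kabs_zero]
  | succ n ih =>
    have hlt : qR Fq ^ cfDeg b n < qR Fq ^ cfDeg b (n + 1) :=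
      pow_lt_pow_right₀ (one_lt_qR Fq) (cfDeg_strictMono hb n.lt_succ_self)
    have hmul : kabs Fq (polyToK Fq (b n * cfDen b (n + 1))) = qR Fq ^ cfDeg b (n + 1) := by
      rw [map_mul, kabs_mul, ih.1, kabs_polyToK (ne_zero_of_natDegree_gt (hb n)), cfDeg_succ,
        pow_add, mul_comm]
    refine ⟨?_, ih.1.trans_lt hlt⟩
    rw [cfDen_add_two, map_add, kabs_add_eq_left (hmul.symm ▸ ih.2.trans hlt), hmul]

lemma kabs_cfDen_succ (hb : ∀ n, 1 ≤ (b n).natDegree) (n : ℕ) :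
    kabs Fq (polyToK Fq (cfDen b (n + 1))) = qR Fq ^ cfDeg b n :=
  (kabs_cfDen_succ_and_lt hb n).1

lemma kabs_cfDen_lt (hb : ∀ n, 1 ≤ (b n).natDegree) (n : ℕ) :
    kabs Fq (polyToK Fq (cfDen b n)) < qR Fq ^ cfDeg b n :=
  (kabs_cfDen_succ_and_lt hb n).2

lemma IsCFOf.one_le_natDegree (hξ : IsCFOf Fq ξ (cfA Fq b)) (n : ℕ) : 1 ≤ (b n).natDegree :=
  hξ.1 (n + 1) n.succ_pos

lemma kabs_cfErr (hξ : IsCFOf Fq ξ (cfA Fq b)) (n : ℕ) :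
    kabs Fq (cfErr ξ b n) = (qR Fq ^ cfDeg b n)⁻¹ := by
  cases n with
  | zero => simp [cfErr_zero, cfDeg, kabs_neg, kabs_one]
  | succ n =>
    have hden := kabs_cfDen_succ hξ.one_le_natDegree
    have hpos : 0 < qR Fq ^ cfDeg b n := pow_pos (qR_pos Fq) _
    have hne : polyToK Fq (cfDen b (n + 1)) ≠ 0 := kabs_pos.1 (hden n ▸ hpos)
    have hfactor : cfErr ξ b (n + 1) = polyToK Fq (cfDen b (n + 1)) *
        (ξ - polyToK Fq (cfNum b (n + 1)) / polyToK Fq (cfDen b (n + 1))) := by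
      rw [cfErr, mul_sub, mul_div_cancel₀ _ hne]
    rw [hfactor, kabs_mul, hξ.2, hden, hden, mul_inv, mul_inv_cancel_left₀ hpos.ne']

lemma cfErr_ne_zero (hξ : IsCFOf Fq ξ (cfA Fq b)) (n : ℕ) : cfErr ξ b n ≠ 0 :=
  kabs_pos.1 (kabs_cfErr hξ n ▸ inv_pos.2 (pow_pos (qR_pos Fq) _))

lemma strictAnti_kabs_cfErr (hξ : IsCFOf Fq ξ (cfA Fq b)) :
    StrictAnti fun n => kabs Fq (cfErr ξ b n) := fun m n hmn => by
  simp only [kabs_cfErr hξ]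
  exact inv_strictAnti₀ (pow_pos (qR_pos Fq) _)
    (pow_lt_pow_right₀ (one_lt_qR Fq) (cfDeg_strictMono hξ.one_le_natDegree hmn))

lemma kabs_cfErr_le_one (hξ : IsCFOf Fq ξ (cfA Fq b)) (n : ℕ) : kabs Fq (cfErr ξ b n) ≤ 1 :=
  kabs_cfErr hξ n ▸ inv_le_one_of_one_le₀ (one_le_pow₀ (one_lt_qR Fq).le)

lemma IsCFOf.kabs_le_one (hξ : IsCFOf Fq ξ (cfA Fq b)) : kabs Fq ξ ≤ 1 :=
  cfErr_one ξ b ▸ kabs_cfErr_le_one hξ 1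

/-! ### Lagrange's theorem -/

lemma eq_and_cfErr_mul_eq (hξ : IsCFOf Fq ξ (cfA Fq b)) {i j : ℕ}
    (h : cfErr ξ b i * cfErr ξ b (j + 1) = cfErr ξ b j * cfErr ξ b (i + 1)) :
    b i = b j ∧ cfErr ξ b (i + 1) * cfErr ξ b (j + 2) = cfErr ξ b (j + 1) * cfErr ξ b (i + 2) := by
  have hdiff : polyToK Fq (b i - b j) * (cfErr ξ b (i + 1) * cfErr ξ b (j + 1)) =
      cfErr ξ b (i + 2) * cfErr ξ b (j + 1) - cfErr ξ b (j + 2) * cfErr ξ b (i + 1) := by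
    rw [cfErr_add_two, cfErr_add_two, map_sub]
    linear_combination -h
  have hpos (n : ℕ) : 0 < kabs Fq (cfErr ξ b n) := kabs_pos.2 (cfErr_ne_zero hξ n)
  have hanti := strictAnti_kabs_cfErr hξ
  have hlt : kabs Fq (polyToK Fq (b i - b j) * (cfErr ξ b (i + 1) * cfErr ξ b (j + 1))) <
      kabs Fq (cfErr ξ b (i + 1) * cfErr ξ b (j + 1)) := by
    rw [hdiff]
    refine map_sub_lt (isNonarchimedean_kabsAbv Fq) ?_ ?_
    · exact (kabs_mul _ _).trans_lt <| (mul_lt_mul_of_pos_right (hanti i.succ.lt_succ_self)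
        (hpos _)).trans_eq (kabs_mul _ _).symm
    · rw [mul_comm (cfErr ξ b (i + 1))]
      exact (kabs_mul _ _).trans_lt <| (mul_lt_mul_of_pos_right (hanti j.succ.lt_succ_self)
        (hpos _)).trans_eq (kabs_mul _ _).symm
  have hb : b i - b j = 0 := by
    by_contra hne
    rw [kabs_mul] at hlt
    exact hlt.not_ge (le_mul_of_one_le_left (kabs_nonneg _) (one_le_kabs_polyToK hne))
  refine ⟨sub_eq_zero.1 hb, ?_⟩
  rw [hb, map_zero, zero_mul] at hdiff
  linear_combination hdiff

lemma ultimatelyPeriodic_of_cfErr_mul_eq (hξ : IsCFOf Fq ξ (cfA Fq b)) {i j : ℕ} (hij : i < j)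
    (h : cfErr ξ b i * cfErr ξ b (j + 1) = cfErr ξ b j * cfErr ξ b (i + 1)) :
    UltimatelyPeriodic b := by
  have hshift (t : ℕ) : cfErr ξ b (i + t) * cfErr ξ b (j + t + 1) =
      cfErr ξ b (j + t) * cfErr ξ b (i + t + 1) := by
    induction t with
    | zero => exact h
    | succ t ih => exact (eq_and_cfErr_mul_eq hξ ih).2
  refine ⟨i, j - i, Nat.sub_pos_of_lt hij, fun n hn => ?_⟩
  obtain ⟨t, rfl⟩ := Nat.exists_eq_add_of_le hn
  rw [show i + t + (j - i) = j + t by lia]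
  exact (eq_and_cfErr_mul_eq hξ (hshift t)).1.symm

section BinaryForms

variable {R : Type*} [CommRing R]

/-- The binary quadratic form `A X ^ 2 + B X Y + E Y ^ 2`. -/
def quadForm (A B E x y : R) : R := A * x ^ 2 + B * x * y + E * y ^ 2

/-- The polar form of `quadForm`, without the factor `1 / 2` since the characteristic may be two. -/
def quadPolar (A B E x y x' y' : R) : R := 2 * A * x * x' + B * (x * y' + x' * y) + 2 * E * y * y'

lemma map_quadForm {S : Type*} [CommRing S] (ι : R →+* S) (A B E x y : R) :
    ι (quadForm A B E x y) = quadForm (ι A) (ι B) (ι E) (ι x) (ι y) := by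
  simp only [quadForm, map_add, map_mul, map_pow]

lemma map_quadPolar {S : Type*} [CommRing S] (ι : R →+* S) (A B E x y x' y' : R) :
    ι (quadPolar A B E x y x' y') = quadPolar (ι A) (ι B) (ι E) (ι x) (ι y) (ι x') (ι y') := by
  simp only [quadPolar, map_add, map_mul, map_ofNat]

lemma quadForm_mul_sub {A B E ξ : R} (h : A * ξ ^ 2 + B * ξ + E = 0) (x y : R) :
    quadForm A B E x y =
      A * ((y * ξ - x) * (y * ξ - x)) - (2 * A * ξ + B) * (y * (y * ξ - x)) := by
  rw [quadForm]
  linear_combination y ^ 2 * h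

lemma quadPolar_mul_sub {A B E ξ : R} (h : A * ξ ^ 2 + B * ξ + E = 0) (x y x' y' : R) :
    quadPolar A B E x y x' y' = (A + A) * ((y * ξ - x) * (y' * ξ - x')) -
      (2 * A * ξ + B) * (y * (y' * ξ - x') + y' * (y * ξ - x)) := by
  rw [quadPolar]
  linear_combination 2 * y * y' * h

lemma quadForm_transform_eq_zero {A B E ξ : R} (h : A * ξ ^ 2 + B * ξ + E = 0) (x y x' y' : R) :
    quadForm A B E x' y' * (y * ξ - x) ^ 2 -
      quadPolar A B E x y x' y' * ((y * ξ - x) * (y' * ξ - x')) +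
      quadForm A B E x y * (y' * ξ - x') ^ 2 = 0 := by
  rw [quadForm, quadPolar, quadForm]
  linear_combination (x' * y - x * y') ^ 2 * h

lemma eq_zero_of_quadForm_transform_eq_zero {A B E x y x' y' : R}
    (hdet : IsUnit (x' * y - x * y')) (h1 : quadForm A B E x' y' = 0)
    (h2 : quadPolar A B E x y x' y' = 0) (h3 : quadForm A B E x y = 0) :
    A = 0 ∧ B = 0 ∧ E = 0 := by
  rw [quadForm] at h1 h3
  rw [quadPolar] at h2
  refine ⟨(hdet.pow 2).mul_right_eq_zero.1 ?_, (hdet.pow 2).mul_right_eq_zero.1 ?_,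
    (hdet.pow 2).mul_right_eq_zero.1 ?_⟩
  · linear_combination y ^ 2 * h1 - y * y' * h2 + y' ^ 2 * h3
  · linear_combination -2 * x * y * h1 + (x * y' + x' * y) * h2 - 2 * x' * y' * h3
  · linear_combination x ^ 2 * h1 - x * x' * h2 + x' ^ 2 * h3

end BinaryForms

section CfTransform

variable {F : Type} [Field F]

/-- The quadratic polynomial satisfied by the complete quotients `cfErr ξ b n / cfErr ξ b (n + 1)`
when `ξ` is a root of `P`: the form attached to `P` in the basis given by two consecutive
convergents. -/
def cfTransform (P : F[X][X]) (b : ℕ → F[X]) (n : ℕ) : F[X][X] :=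
  C (quadForm (P.coeff 2) (P.coeff 1) (P.coeff 0) (cfNum b (n + 1)) (cfDen b (n + 1))) * X ^ 2 +
    C (-quadPolar (P.coeff 2) (P.coeff 1) (P.coeff 0) (cfNum b n) (cfDen b n)
      (cfNum b (n + 1)) (cfDen b (n + 1))) * X +
    C (quadForm (P.coeff 2) (P.coeff 1) (P.coeff 0) (cfNum b n) (cfDen b n))

lemma natDegree_cfTransform_le (P : F[X][X]) (b : ℕ → F[X]) (n : ℕ) :
    (cfTransform P b n).natDegree ≤ 2 :=
  natDegree_quadratic_le

lemma coeff_zero_cfTransform (P : F[X][X]) (b : ℕ → F[X]) (n : ℕ) : (cfTransform P b n).coeff 0 =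
    quadForm (P.coeff 2) (P.coeff 1) (P.coeff 0) (cfNum b n) (cfDen b n) := by
  simp [cfTransform]

lemma coeff_one_cfTransform (P : F[X][X]) (b : ℕ → F[X]) (n : ℕ) : (cfTransform P b n).coeff 1 =
    -quadPolar (P.coeff 2) (P.coeff 1) (P.coeff 0) (cfNum b n) (cfDen b n)
      (cfNum b (n + 1)) (cfDen b (n + 1)) := by
  simp [cfTransform]

lemma coeff_two_cfTransform (P : F[X][X]) (b : ℕ → F[X]) (n : ℕ) : (cfTransform P b n).coeff 2 =
    quadForm (P.coeff 2) (P.coeff 1) (P.coeff 0) (cfNum b (n + 1)) (cfDen b (n + 1)) := by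
  simp [cfTransform]

lemma cfTransform_ne_zero {P : F[X][X]} (hP : P ≠ 0) (hdeg : P.natDegree ≤ 2) (b : ℕ → F[X])
    (n : ℕ) : cfTransform P b n ≠ 0 := by
  intro h
  have h2 := coeff_two_cfTransform P b n
  have h1 := coeff_one_cfTransform P b n
  have h0 := coeff_zero_cfTransform P b n
  rw [h, coeff_zero, eq_comm] at h0 h1 h2
  have hdet : IsUnit (cfNum b (n + 1) * cfDen b n - cfNum b n * cfDen b (n + 1)) :=
    cfNum_mul_cfDen_sub b n ▸ isUnit_neg_one.pow _
  obtain ⟨hA, hB, hE⟩ := eq_zero_of_quadForm_transform_eq_zero hdet h2 (neg_eq_zero.1 h1) h0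
  refine hP (Polynomial.ext fun i => ?_)
  match i with
  | 0 => exact hE
  | 1 => exact hB
  | 2 => exact hA
  | i + 3 => exact coeff_eq_zero_of_natDegree_lt (by lia)

lemma evalK_cfTransform_eq_zero {P : F[X][X]} (hdeg : P.natDegree ≤ 2) {b : ℕ → F[X]} {ξ : K F}
    (h : evalK F P ξ = 0) {n : ℕ} (hn : cfErr ξ b (n + 1) ≠ 0) :
    evalK F (cfTransform P b n) (cfErr ξ b n / cfErr ξ b (n + 1)) = 0 := by
  rw [evalK_eq_of_natDegree_le_two hdeg] at h
  have := quadForm_transform_eq_zero h (polyToK F (cfNum b n)) (polyToK F (cfDen b n))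
    (polyToK F (cfNum b (n + 1))) (polyToK F (cfDen b (n + 1)))
  rw [← map_quadForm, ← map_quadForm, ← map_quadPolar] at this
  change _ * cfErr ξ b n ^ 2 - _ * (cfErr ξ b n * cfErr ξ b (n + 1)) + _ * cfErr ξ b (n + 1) ^ 2 = 0
    at this
  rw [evalK_eq_of_natDegree_le_two (natDegree_cfTransform_le P b n), coeff_zero_cfTransform,
    coeff_one_cfTransform, coeff_two_cfTransform, map_neg]
  field_simp
  linear_combination this

lemma finite_setOf_evalK_eq_zero {P : F[X][X]} (hP : P ≠ 0) :
    {ξ : K F | evalK F P ξ = 0}.Finite := by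
  refine (finite_setOfPred_isRoot
    ((Polynomial.map_ne_zero_iff (polyToK_injective F)).mpr hP)).subset ?_
  intro ξ hξ
  rwa [Set.mem_ofPred_eq, IsRoot, eval_map]

end CfTransform

lemma kabs_cfDen_mul_cfErr_le_one (hξ : IsCFOf Fq ξ (cfA Fq b)) {i j : ℕ} (hij : i ≤ j + 1) :
    kabs Fq (polyToK Fq (cfDen b i) * cfErr ξ b j) ≤ 1 := by
  have hb := hξ.one_le_natDegree
  have hden : kabs Fq (polyToK Fq (cfDen b i)) ≤ qR Fq ^ cfDeg b j := by
    rcases hij.lt_or_eq with hij | rfl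
    · exact (kabs_cfDen_lt hb i).le.trans (pow_le_pow_right₀ (one_lt_qR Fq).le
        ((cfDeg_strictMono hb).monotone (Nat.le_of_lt_succ hij)))
    · exact (kabs_cfDen_succ hb j).le
  rwa [kabs_mul, kabs_cfErr hξ, ← div_eq_mul_inv, div_le_one (pow_pos (qR_pos Fq) _)]

lemma kabs_mul_cfErr_mul_cfErr_le (hξ : IsCFOf Fq ξ (cfA Fq b)) (f : K Fq) (i j : ℕ) :
    kabs Fq (f * (cfErr ξ b i * cfErr ξ b j)) ≤ kabs Fq f := by
  rw [kabs_mul, kabs_mul]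
  exact mul_le_of_le_one_right (kabs_nonneg f)
    (mul_le_one₀ (kabs_cfErr_le_one hξ i) (kabs_nonneg _) (kabs_cfErr_le_one hξ j))

lemma kabs_quadForm_convergent_le (hξ : IsCFOf Fq ξ (cfA Fq b)) {A B E : K Fq}
    (h : A * ξ ^ 2 + B * ξ + E = 0) (n : ℕ) :
    kabs Fq (quadForm A B E (polyToK Fq (cfNum b n)) (polyToK Fq (cfDen b n))) ≤
      max (kabs Fq A) (kabs Fq (2 * A * ξ + B)) := by
  rw [quadForm_mul_sub h]
  refine (map_sub_le_max (isNonarchimedean_kabsAbv Fq) _ _).trans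
    (max_le_max (kabs_mul_cfErr_mul_cfErr_le hξ A n n) ?_)
  exact (kabs_mul _ _).trans_le
    (mul_le_of_le_one_right (kabs_nonneg _) (kabs_cfDen_mul_cfErr_le_one hξ n.le_succ))

lemma kabs_quadPolar_convergent_le (hξ : IsCFOf Fq ξ (cfA Fq b)) {A B E : K Fq}
    (h : A * ξ ^ 2 + B * ξ + E = 0) (n : ℕ) :
    kabs Fq (quadPolar A B E (polyToK Fq (cfNum b n)) (polyToK Fq (cfDen b n))
      (polyToK Fq (cfNum b (n + 1))) (polyToK Fq (cfDen b (n + 1)))) ≤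
        max (kabs Fq A) (kabs Fq (2 * A * ξ + B)) := by
  have hna := isNonarchimedean_kabsAbv Fq
  have hadd : kabs Fq (A + A) ≤ kabs Fq A := (hna A A).trans_eq (max_self _)
  rw [quadPolar_mul_sub h]
  refine (map_sub_le_max hna _ _).trans
    (max_le_max ((kabs_mul_cfErr_mul_cfErr_le hξ _ n (n + 1)).trans hadd) ?_)
  refine (kabs_mul _ _).trans_le (mul_le_of_le_one_right (kabs_nonneg _) ((hna _ _).trans ?_))
  exact max_le (kabs_cfDen_mul_cfErr_le_one hξ (by lia)) (kabs_cfDen_mul_cfErr_le_one hξ le_rfl)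

lemma exists_heightDeg_cfTransform_le (hξ : IsCFOf Fq ξ (cfA Fq b)) {P : Fq[X][X]}
    (hdeg : P.natDegree ≤ 2) (hroot : evalK Fq P ξ = 0) :
    ∃ h, ∀ n, heightDeg (cfTransform P b n) ≤ h := by
  rw [evalK_eq_of_natDegree_le_two hdeg] at hroot
  obtain ⟨h, hh⟩ := pow_unbounded_of_one_lt (max (kabs Fq (polyToK Fq (P.coeff 2)))
    (kabs Fq (2 * polyToK Fq (P.coeff 2) * ξ + polyToK Fq (P.coeff 1)))) (one_lt_qR Fq)
  have hform (n : ℕ) : (quadForm (P.coeff 2) (P.coeff 1) (P.coeff 0) (cfNum b n)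
      (cfDen b n)).natDegree ≤ h := by
    rw [← kabs_polyToK_le_pow_iff, map_quadForm]
    exact (kabs_quadForm_convergent_le hξ hroot n).trans hh.le
  refine ⟨h, fun n => heightDeg_le_iff.2 fun i => ?_⟩
  match i with
  | 0 => exact coeff_zero_cfTransform P b n ▸ hform n
  | 1 =>
    rw [coeff_one_cfTransform, natDegree_neg, ← kabs_polyToK_le_pow_iff, map_quadPolar]
    exact (kabs_quadPolar_convergent_le hξ hroot n).trans hh.le
  | 2 => exact coeff_two_cfTransform P b n ▸ hform (n + 1)
  | i + 3 =>
    rw [coeff_eq_zero_of_natDegree_lt ((natDegree_cfTransform_le P b n).trans_lt (by lia)),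
      natDegree_zero]
    exact h.zero_le

theorem notRootOfDegreeLE_two (hξ : IsCFOf Fq ξ (cfA Fq b)) (hb : ¬ UltimatelyPeriodic b) :
    NotRootOfDegreeLE 2 ξ := by
  intro P hP hdeg hroot
  obtain ⟨h, hh⟩ := exists_heightDeg_cfTransform_le hξ hdeg hroot
  have hfin : (⋃ R ∈ {R : Fq[X][X] | R.natDegree ≤ 2 ∧ heightDeg R ≤ h} \ {0},
      {x : K Fq | evalK Fq R x = 0}).Finite :=
    ((finite_setOf_natDegree_le_heightDeg_le 2 h).sdiff).biUnion
      fun R hR => finite_setOf_evalK_eq_zero hR.2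
  obtain ⟨i, j, hij, heq⟩ := hfin.exists_lt_map_eq_of_forall_mem
    (f := fun n => cfErr ξ b n / cfErr ξ b (n + 1)) fun n =>
      Set.mem_iUnion₂.2 ⟨cfTransform P b n,
        ⟨⟨natDegree_cfTransform_le P b n, hh n⟩, cfTransform_ne_zero hP hdeg b n⟩,
        evalK_cfTransform_eq_zero hdeg hroot (cfErr_ne_zero hξ _)⟩
  rw [div_eq_div_iff (cfErr_ne_zero hξ _) (cfErr_ne_zero hξ _)] at heq
  exact hb (ultimatelyPeriodic_of_cfErr_mul_eq hξ hij heq)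

end Convergents

/-! ### Repetitions in an infinite word -/

section Words

variable {A : Type*} {b : ℕ → A}

/-- The prefix of length `N` of `b` has the form `U V^w` with `|U| = r`, `|V| = s` and `w ≥ 1`. -/
structure IsRepetition (b : ℕ → A) (r s N : ℕ) : Prop where
  period_pos : 0 < s
  add_le : r + s ≤ N
  add_period_eq : ∀ i, r ≤ i → i + s < N → b (i + s) = b i

lemma ultimatelyPeriodic_of_forall_exists_isRepetition {R : ℕ}
    (h : ∀ M, ∃ r s N, r < R ∧ s < R ∧ M ≤ N ∧ IsRepetition b r s N) : UltimatelyPeriodic b := by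
  choose r s N hr hs hN hrep using h
  obtain ⟨p, hp⟩ := Finite.exists_infinite_fiber
    fun M => ((⟨r M, hr M⟩, ⟨s M, hs M⟩) : Fin R × Fin R)
  rw [Set.infinite_coe_iff] at hp
  have hp' {M : ℕ} (hM : M ∈ (fun M => ((⟨r M, hr M⟩, ⟨s M, hs M⟩) : Fin R × Fin R)) ⁻¹' {p}) :
      r M = p.1 ∧ s M = p.2 := by
    rw [← Set.mem_singleton_iff.1 hM]
    exact ⟨rfl, rfl⟩
  obtain ⟨M₀, hM₀⟩ := hp.nonempty
  refine ⟨p.1, p.2, (hp' hM₀).2 ▸ (hrep M₀).period_pos, fun i hi => ?_⟩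
  obtain ⟨M, hM, hiM⟩ := hp.exists_gt (i + p.2)
  obtain ⟨hrM, hsM⟩ := hp' hM
  exact hsM ▸ (hrep M).add_period_eq i (hrM ▸ hi) (hsM ▸ hiM.trans_le (hN M))

lemma getElem_flatten_replicate_append {V W : List A} (hV : 0 < V.length) (hW : W <+: V) {k i : ℕ}
    (h : i < ((List.replicate k V).flatten ++ W).length) :
    ((List.replicate k V).flatten ++ W)[i] = V[i % V.length]'(Nat.mod_lt _ hV) := by
  induction k generalizing i with
  | zero =>
    simp only [List.replicate_zero, List.flatten_nil, List.nil_append] at h ⊢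
    simp only [hW.getElem h, Nat.mod_eq_of_lt (h.trans_le hW.length_le)]
  | succ k ih =>
    simp only [List.replicate_succ, List.flatten_cons, List.append_assoc] at h ⊢
    rcases lt_or_ge i V.length with hi | hi
    · simp only [List.getElem_append_left hi, Nat.mod_eq_of_lt hi]
    · simp only [List.getElem_append_right hi, ih, Nat.mod_eq_sub_mod hi]

lemma IsPrefixOfSeq.isRepetition {U V : List A} {w : ℝ} (hV : V ≠ [])
    (hlen : V.length ≤ (wordPow V w).length) (h : IsPrefixOfSeq (U ++ wordPow V w) b) :
    IsRepetition b U.length V.length (U.length + (wordPow V w).length) where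
  period_pos := List.length_pos_iff.2 hV
  add_le := Nat.add_le_add_left hlen _
  add_period_eq i hi hiN := by
    have hV0 : 0 < V.length := List.length_pos_iff.2 hV
    have hb (j : ℕ) (hj : j < (wordPow V w).length) :
        b (U.length + j) = V[j % V.length]'(Nat.mod_lt _ hV0) := by
      rw [← h (U.length + j) (by rw [List.length_append]; lia), List.get_eq_getElem]
      simp only [List.getElem_append_right (Nat.le_add_right _ _), Nat.add_sub_cancel_left]
      exact getElem_flatten_replicate_append hV0 ⟨_, List.take_append_drop _ _⟩ hj
    obtain ⟨j, rfl⟩ := Nat.exists_eq_add_of_le hi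
    rw [add_assoc, hb (j + V.length) (by lia), hb j (by lia)]
    simp only [Nat.add_mod_right]

lemma SatisfiesCond.exists_isRepetition {ρ : ℝ} (hρ : 1 ≤ ρ) (hb : ¬ UltimatelyPeriodic b)
    (h : SatisfiesCond b ρ) (R : ℕ) :
    ∃ r s N, IsRepetition b r s N ∧ R ≤ r + s ∧ ρ * ((r : ℝ) + s) ≤ N := by
  obtain ⟨U, V, w, hV, -, hpre, hlen, hmono⟩ := h
  have hrep (n : ℕ) : IsRepetition b (U n).length (V n).length
      ((U n).length + (wordPow (V n) (w n)).length) := by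
    refine (hpre n).isRepetition (hV n) (Nat.le_of_add_le_add_left (a := (U n).length) ?_)
    exact_mod_cast (le_mul_of_one_le_left (Nat.cast_nonneg _) hρ).trans (hlen n)
  by_contra! hcon
  refine hb (ultimatelyPeriodic_of_forall_exists_isRepetition (R := R) fun M =>
    ⟨_, _, _, ?_, ?_, hmono.le_apply.trans (Nat.le_add_left _ _), hrep M⟩)
  all_goals
    by_contra hR
    exact (hcon _ _ _ (hrep M) (by lia)).not_ge (by exact_mod_cast hlen M)

end Words

/-! ### The quadratic polynomial attached to a repetition -/

section Repetition

section RepetitionPolynomial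

variable {F : Type} [Field F]

/-- The linear polynomial `q_{n-1} X - p_{n-1}` vanishing at a convergent. -/
def cfLinear (b : ℕ → F[X]) (n : ℕ) : F[X][X] := C (cfDen b n) * X - C (cfNum b n)

/-- The quadratic polynomial vanishing at the continued fraction with preperiod `b 0, …, b (r - 1)`
and period `b r, …, b (u - 1)`. -/
def cfQuadratic (b : ℕ → F[X]) (r u : ℕ) : F[X][X] :=
  cfLinear b r * cfLinear b (u + 1) - cfLinear b (r + 1) * cfLinear b u

lemma natDegree_cfLinear_le (b : ℕ → F[X]) (n : ℕ) : (cfLinear b n).natDegree ≤ 1 := by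
  unfold cfLinear
  compute_degree

lemma natDegree_cfQuadratic_le (b : ℕ → F[X]) (r u : ℕ) : (cfQuadratic b r u).natDegree ≤ 2 :=
  natDegree_sub_le_of_le
    (natDegree_mul_le_of_le (natDegree_cfLinear_le b r) (natDegree_cfLinear_le b (u + 1)))
    (natDegree_mul_le_of_le (natDegree_cfLinear_le b (r + 1)) (natDegree_cfLinear_le b u))

lemma evalK_cfQuadratic (b : ℕ → F[X]) (ξ : K F) (r u : ℕ) : evalK F (cfQuadratic b r u) ξ =
    cfErr ξ b r * cfErr ξ b (u + 1) - cfErr ξ b (r + 1) * cfErr ξ b u := by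
  simp [evalK, cfQuadratic, cfLinear, cfErr, eval₂_sub, eval₂_mul]

lemma evalK_derivative_cfQuadratic (b : ℕ → F[X]) (ξ : K F) (r u : ℕ) :
    evalK F (derivative (cfQuadratic b r u)) ξ =
      polyToK F (cfDen b (u + 1)) * cfErr ξ b r -
        (polyToK F (cfDen b (r + 1)) * cfErr ξ b u -
          (polyToK F (cfDen b r) * cfErr ξ b (u + 1) -
            polyToK F (cfDen b u) * cfErr ξ b (r + 1))) := by
  simp only [evalK, cfQuadratic, cfLinear, cfErr, derivative_sub, derivative_mul, derivative_C,
    derivative_X, eval₂_sub, eval₂_add, eval₂_mul, eval₂_C, eval₂_X, eval₂_zero, eval₂_one]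
  ring

lemma evalK_cfQuadratic_succ {b : ℕ → F[X]} (ξ : K F) {r u : ℕ} (h : b u = b r) :
    evalK F (cfQuadratic b (r + 1) (u + 1)) ξ = -evalK F (cfQuadratic b r u) ξ := by
  rw [evalK_cfQuadratic, evalK_cfQuadratic, cfErr_add_two, cfErr_add_two, h]
  ring

lemma IsRepetition.cfDeg_add {b : ℕ → F[X]} {r s N : ℕ} (h : IsRepetition b r s N) :
    cfDeg b (N - s) + cfDeg b (r + s) = cfDeg b N + cfDeg b r := by
  have hadd (t : ℕ) (ht : r + s + t ≤ N) :
      cfDeg b (r + t) + cfDeg b (r + s) = cfDeg b (r + t + s) + cfDeg b r := by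
    induction t with
    | zero => exact add_comm _ _
    | succ t ih =>
      have hb := h.add_period_eq (r + t) (by lia) (by lia)
      rw [← add_assoc, cfDeg_succ, add_right_comm _ 1 s, cfDeg_succ, hb]
      have := ih (by lia)
      lia
  have hN := h.add_le
  have := hadd (N - (r + s)) (by lia)
  rwa [show r + (N - (r + s)) = N - s by lia, show N - s + s = N by lia] at this

end RepetitionPolynomial

variable {b : ℕ → Fq[X]} {ξ : K Fq} {r s N : ℕ}

lemma IsRepetition.kabs_evalK_cfQuadratic (h : IsRepetition b r s N) (ξ : K Fq) :
    kabs Fq (evalK Fq (cfQuadratic b (N - s) N) ξ) =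
      kabs Fq (evalK Fq (cfQuadratic b r (r + s)) ξ) := by
  have hadd (t : ℕ) (ht : r + s + t ≤ N) :
      kabs Fq (evalK Fq (cfQuadratic b (r + t) (r + t + s)) ξ) =
        kabs Fq (evalK Fq (cfQuadratic b r (r + s)) ξ) := by
    induction t with
    | zero => rfl
    | succ t ih =>
      rw [← ih (by lia), ← kabs_neg (evalK Fq (cfQuadratic b (r + t) _) ξ),
        ← evalK_cfQuadratic_succ ξ (h.add_period_eq (r + t) (by lia) (by lia)), ← add_assoc,
        add_right_comm _ 1 s]
  have hN := h.add_le
  have := hadd (N - (r + s)) (by lia)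
  rwa [show r + (N - (r + s)) = N - s by lia, show N - s + s = N by lia] at this

lemma kabs_evalK_cfQuadratic_le (hξ : IsCFOf Fq ξ (cfA Fq b)) (r u : ℕ) :
    kabs Fq (evalK Fq (cfQuadratic b r u) ξ) ≤ kabs Fq (cfErr ξ b r) * kabs Fq (cfErr ξ b u) := by
  have hanti := (strictAnti_kabs_cfErr hξ).antitone
  rw [evalK_cfQuadratic]
  refine (map_sub_le_max (isNonarchimedean_kabsAbv Fq) _ _).trans (max_le ?_ ?_)
  · exact (kabs_mul _ _).trans_le (mul_le_mul_of_nonneg_left (hanti u.le_succ) (kabs_nonneg _))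
  · exact (kabs_mul _ _).trans_le (mul_le_mul_of_nonneg_right (hanti r.le_succ) (kabs_nonneg _))

lemma kabs_evalK_derivative_cfQuadratic (hξ : IsCFOf Fq ξ (cfA Fq b)) {r u : ℕ} (hru : r < u) :
    kabs Fq (evalK Fq (derivative (cfQuadratic b r u)) ξ) =
      qR Fq ^ cfDeg b u / qR Fq ^ cfDeg b r := by
  have hb := hξ.one_le_natDegree
  have hna := isNonarchimedean_kabsAbv Fq
  have hmain : kabs Fq (polyToK Fq (cfDen b (u + 1)) * cfErr ξ b r) =
      qR Fq ^ cfDeg b u / qR Fq ^ cfDeg b r := by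
    rw [kabs_mul, kabs_cfDen_succ hb, kabs_cfErr hξ, div_eq_mul_inv]
  have hone : 1 < qR Fq ^ cfDeg b u / qR Fq ^ cfDeg b r := by
    rw [one_lt_div (pow_pos (qR_pos Fq) _)]
    exact pow_lt_pow_right₀ (one_lt_qR Fq) (cfDeg_strictMono hb hru)
  have hlast : kabs Fq (polyToK Fq (cfDen b u) * cfErr ξ b (r + 1)) <
      qR Fq ^ cfDeg b u / qR Fq ^ cfDeg b r := by
    rw [kabs_mul, div_eq_mul_inv, ← kabs_cfErr hξ]
    exact mul_lt_mul'' (kabs_cfDen_lt hb u) (strictAnti_kabs_cfErr hξ r.lt_succ_self)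
      (kabs_nonneg _) (kabs_nonneg _)
  rw [evalK_derivative_cfQuadratic, ← hmain]
  refine map_sub_eq_left hna ((map_sub_lt hna ?_ (map_sub_lt hna ?_ hlast)).trans_eq hmain.symm)
  · exact (kabs_cfDen_mul_cfErr_le_one hξ (by lia)).trans_lt hone
  · exact (kabs_cfDen_mul_cfErr_le_one hξ (by lia)).trans_lt hone

lemma Hpoly_cfLinear_le (hξ : kabs Fq ξ ≤ 1) {n : ℕ} {c : ℝ}
    (hden : kabs Fq (polyToK Fq (cfDen b n)) ≤ c) (herr : kabs Fq (cfErr ξ b n) ≤ c) :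
    Hpoly Fq (cfLinear b n) ≤ c := by
  refine Hpoly_le fun i => ?_
  match i with
  | 0 =>
    have hnum : polyToK Fq (cfNum b n) = polyToK Fq (cfDen b n) * ξ - cfErr ξ b n := by
      rw [cfErr, sub_sub_cancel]
    simp only [cfLinear, coeff_sub, mul_coeff_zero, coeff_X_zero, mul_zero, coeff_C_zero, zero_sub,
      map_neg, kabs_neg, hnum]
    refine (map_sub_le_max (isNonarchimedean_kabsAbv Fq) _ _).trans (max_le ?_ herr)
    exact (kabs_mul _ _).trans_le ((mul_le_of_le_one_right (kabs_nonneg _) hξ).trans hden)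
  | 1 => simpa [cfLinear, coeff_C] using hden
  | i + 2 =>
    rw [coeff_eq_zero_of_natDegree_lt ((natDegree_cfLinear_le b n).trans_lt (by lia)), map_zero,
      kabs_zero]
    exact (kabs_nonneg _).trans herr

lemma Hpoly_cfQuadratic_le (hξ : IsCFOf Fq ξ (cfA Fq b)) (r u : ℕ) :
    Hpoly Fq (cfQuadratic b r u) ≤ qR Fq ^ (cfDeg b r + cfDeg b u) := by
  have hlin (n : ℕ) : Hpoly Fq (cfLinear b n) ≤ qR Fq ^ cfDeg b n ∧
      Hpoly Fq (cfLinear b (n + 1)) ≤ qR Fq ^ cfDeg b n := by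
    have hone : 1 ≤ qR Fq ^ cfDeg b n := one_le_pow₀ (one_lt_qR Fq).le
    exact ⟨Hpoly_cfLinear_le hξ.kabs_le_one (kabs_cfDen_lt hξ.one_le_natDegree n).le
        ((kabs_cfErr_le_one hξ n).trans hone),
      Hpoly_cfLinear_le hξ.kabs_le_one (kabs_cfDen_succ hξ.one_le_natDegree n).le
        ((kabs_cfErr_le_one hξ _).trans hone)⟩
  have hmul {P R : Fq[X][X]} (hP : Hpoly Fq P ≤ qR Fq ^ cfDeg b r)
      (hR : Hpoly Fq R ≤ qR Fq ^ cfDeg b u) (i : ℕ) :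
      kabs Fq (polyToK Fq ((P * R).coeff i)) ≤ qR Fq ^ (cfDeg b r + cfDeg b u) := by
    have hR0 : 0 ≤ Hpoly Fq R := (kabs_nonneg _).trans (kabs_coeff_le_Hpoly R 0)
    rw [pow_add]
    exact (kabs_coeff_le_Hpoly _ i).trans ((Hpoly_mul P R).trans_le
      (mul_le_mul hP hR hR0 (pow_pos (qR_pos Fq) _).le))
  refine Hpoly_le fun i => ?_
  rw [cfQuadratic, coeff_sub, map_sub]
  exact (map_sub_le_max (isNonarchimedean_kabsAbv Fq) _ _).trans
    (max_le (hmul (hlin r).1 (hlin u).2 i) (hmul (hlin r).2 (hlin u).1 i))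

lemma IsRepetition.kabs_evalK_cfQuadratic_le (h : IsRepetition b r s N)
    (hξ : IsCFOf Fq ξ (cfA Fq b)) : kabs Fq (evalK Fq (cfQuadratic b r (r + s)) ξ) ≤
      qR Fq ^ (-(2 * cfDeg b N + cfDeg b r - cfDeg b (r + s)) : ℝ) := by
  have hdeg : (cfDeg b (N - s) + cfDeg b (r + s) : ℝ) = cfDeg b N + cfDeg b r :=
    mod_cast h.cfDeg_add
  calc kabs Fq (evalK Fq (cfQuadratic b r (r + s)) ξ)
      ≤ kabs Fq (cfErr ξ b (N - s)) * kabs Fq (cfErr ξ b N) :=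
        h.kabs_evalK_cfQuadratic ξ ▸ Ooto.kabs_evalK_cfQuadratic_le hξ (N - s) N
    _ = qR Fq ^ (-(cfDeg b (N - s) + cfDeg b N : ℝ)) := by
        rw [kabs_cfErr hξ, kabs_cfErr hξ, ← mul_inv, ← pow_add, Real.rpow_neg (qR_pos Fq).le,
          ← Real.rpow_natCast, Nat.cast_add]
    _ = _ := by
        congr 1
        linarith

lemma IsRepetition.kabs_evalK_div_le (h : IsRepetition b r s N)
    (hξ : IsCFOf Fq ξ (cfA Fq b)) : kabs Fq (evalK Fq (cfQuadratic b r (r + s)) ξ) /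
      kabs Fq (evalK Fq (derivative (cfQuadratic b r (r + s))) ξ) ≤
        qR Fq ^ (-(2 * cfDeg b N) : ℝ) := by
  have hpos := h.period_pos
  rw [kabs_evalK_derivative_cfQuadratic hξ (by lia), ← Real.rpow_natCast, ← Real.rpow_natCast,
    ← Real.rpow_sub (qR_pos Fq), div_le_iff₀ (Real.rpow_pos_of_pos (qR_pos Fq) _),
    ← Real.rpow_add (qR_pos Fq)]
  refine (h.kabs_evalK_cfQuadratic_le hξ).trans_eq ?_
  congr 1
  ring

lemma evalK_derivative_cfQuadratic_ne_zero (hξ : IsCFOf Fq ξ (cfA Fq b)) {r u : ℕ} (hru : r < u) :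
    evalK Fq (derivative (cfQuadratic b r u)) ξ ≠ 0 := by
  rw [← kabs_pos, kabs_evalK_derivative_cfQuadratic hξ hru]
  exact div_pos (pow_pos (qR_pos Fq) _) (pow_pos (qR_pos Fq) _)

lemma cfQuadratic_ne_zero (hξ : IsCFOf Fq ξ (cfA Fq b)) {r u : ℕ} (hru : r < u) :
    cfQuadratic b r u ≠ 0 := fun h =>
  evalK_derivative_cfQuadratic_ne_zero hξ hru (by rw [h, derivative_zero, evalK, eval₂_zero])

end Repetition

/-! ### Growth of the denominators -/

section Growth

/-- The sequence `g n / n` has all its limit points between `lo` and `hi`. -/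
structure HasLinearGrowth (g : ℕ → ℝ) (lo hi : ℝ) : Prop where
  eventually_ge : ∀ μ < lo, ∀ᶠ n : ℕ in atTop, μ * n ≤ g n
  eventually_le : ∀ ν > hi, ∀ᶠ n : ℕ in atTop, g n ≤ ν * n

lemma exists_forall_le_add_of_eventually_le {f g : ℕ → ℝ} (h : ∀ᶠ n in atTop, f n ≤ g n) :
    ∃ c, ∀ n, f n ≤ g n + c := by
  obtain ⟨c, hc⟩ := IsBoundedUnder.bddAbove_range (f := fun n => f n - g n)
    ⟨0, h.mono fun n hn => sub_nonpos.2 hn⟩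
  exact ⟨c, fun n => sub_le_iff_le_add'.1 (hc (Set.mem_range_self n))⟩

lemma exists_rates {lo hi a σ : ℝ} (hhi : 0 < hi) (ha : 0 ≤ a) (hσ : 0 < σ)
    (h : a < lo / hi * σ) : ∃ μ < lo, ∃ ν > hi, 0 < μ ∧ a * ν < μ * σ := by
  rw [div_mul_eq_mul_div, lt_div_iff₀ hhi, ← div_lt_iff₀ hσ] at h
  obtain ⟨μ, hμ, hμlo⟩ := exists_between h
  have hμ0 : 0 < μ := (div_nonneg (mul_nonneg ha hhi.le) hσ.le).trans_lt hμ
  rw [div_lt_iff₀ hσ] at hμ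
  have hnhds : ∀ᶠ ν in nhds hi, a * ν < μ * σ :=
    ((continuous_const_mul a).tendsto hi).eventually_lt_const hμ
  obtain ⟨ν, hν, hhiν⟩ := (hnhds.and_frequently (frequently_gt_nhds hi)).exists
  exact ⟨μ, hμlo, ν, hhiν, hμ0, hν⟩

variable {g : ℕ → ℝ} {lo hi : ℝ}

lemma HasLinearGrowth.exists_bounds (h : HasLinearGrowth g lo hi) {μ ν : ℝ} (hμ : μ < lo)
    (hν : hi < ν) : ∃ c c' : ℝ, ∀ n : ℕ, μ * n - c ≤ g n ∧ g n ≤ ν * n + c' := by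
  obtain ⟨c, hc⟩ := exists_forall_le_add_of_eventually_le (h.eventually_ge μ hμ)
  obtain ⟨c', hc'⟩ := exists_forall_le_add_of_eventually_le (h.eventually_le ν hν)
  exact ⟨c, c', fun n => ⟨sub_le_iff_le_add.2 (hc n), hc' n⟩⟩

lemma HasLinearGrowth.exists_mul_add_le_two_mul (h : HasLinearGrowth g lo hi) (hhi : 0 < hi)
    {a ρ : ℝ} (ha : 0 ≤ a) (hρ : 0 < ρ) (haρ : a < lo / hi * ρ) :
    ∃ R : ℕ, ∀ r s N : ℕ, R ≤ r + s → ρ * (r + s) ≤ N → a * (g r + g (r + s)) ≤ 2 * g N := by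
  obtain ⟨μ, hμ, ν, hν, hμ0, hμν⟩ := exists_rates hhi ha hρ haρ
  obtain ⟨c, c', hc⟩ := h.exists_bounds hμ hν
  obtain ⟨R, hR⟩ := exists_nat_ge ((c + c' * a) / (μ * ρ - a * ν))
  rw [div_le_iff₀ (sub_pos.2 hμν)] at hR
  refine ⟨R, fun r s N hRrs hN => ?_⟩
  have hrs : (R : ℝ) ≤ r + s := mod_cast hRrs
  have hupper : g r + g (r + s) ≤ 2 * (ν * (r + s)) + 2 * c' := by
    have := (hc r).2
    have := (hc (r + s)).2
    have : 0 ≤ ν * s := mul_nonneg (hhi.trans hν).le s.cast_nonneg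
    push_cast at *
    linarith
  calc a * (g r + g (r + s)) ≤ a * (2 * (ν * (r + s)) + 2 * c') :=
        mul_le_mul_of_nonneg_left hupper ha
    _ = 2 * (μ * (ρ * (r + s)) + c' * a - (r + s) * (μ * ρ - a * ν)) := by ring
    _ ≤ 2 * (μ * (ρ * (r + s)) + c' * a - R * (μ * ρ - a * ν)) := by
        have := mul_le_mul_of_nonneg_right hrs (sub_pos.2 hμν).le
        linarith
    _ ≤ 2 * (μ * N - c) := by
        have := mul_le_mul_of_nonneg_left hN hμ0.le
        linarith
    _ ≤ 2 * g N := mul_le_mul_of_nonneg_left (hc N).1 zero_le_two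

lemma HasLinearGrowth.exists_mul_add_le_two_mul_add (h : HasLinearGrowth g lo hi) (hhi : 0 < hi)
    {a ρ : ℝ} (ha : 0 ≤ a) (hρ : 1 ≤ ρ) (haρ : a < lo / hi * (ρ + 1)) :
    ∃ R : ℕ, ∀ r s N : ℕ, R ≤ r + s → ρ * (r + s) ≤ N →
      a * (g r + g (r + s)) ≤ 2 * (g N + g r) := by
  obtain ⟨μ, hμ, ν, hν, hμ0, hμν⟩ := exists_rates hhi ha (by linarith) haρ
  obtain ⟨c, c', hc⟩ := h.exists_bounds hμ hν
  obtain ⟨R, hR⟩ := exists_nat_ge ((4 * c + 2 * c' * a) / (μ * (ρ + 1) - a * ν))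
  rw [div_le_iff₀ (sub_pos.2 hμν)] at hR
  refine ⟨R, fun r s N hRrs hN => ?_⟩
  have hrs : (R : ℝ) ≤ 2 * r + s := mod_cast hRrs.trans (by lia)
  have hlength : (2 * r + s) * (ρ + 1) ≤ 2 * (N + r : ℝ) := by
    have : 0 ≤ (ρ - 1) * s := mul_nonneg (sub_nonneg.2 hρ) s.cast_nonneg
    linarith
  have hupper : g r + g (r + s) ≤ ν * (2 * r + s) + 2 * c' := by
    have := (hc r).2
    have := (hc (r + s)).2
    push_cast at *
    linarith
  calc a * (g r + g (r + s)) ≤ a * (ν * (2 * r + s) + 2 * c') :=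
        mul_le_mul_of_nonneg_left hupper ha
    _ = μ * ((2 * r + s) * (ρ + 1)) + 2 * c' * a - (2 * r + s) * (μ * (ρ + 1) - a * ν) := by ring
    _ ≤ μ * ((2 * r + s) * (ρ + 1)) + 2 * c' * a - R * (μ * (ρ + 1) - a * ν) := by
        have := mul_le_mul_of_nonneg_right hrs (sub_pos.2 hμν).le
        linarith
    _ ≤ 2 * ((μ * N - c) + (μ * r - c)) := by
        have := mul_le_mul_of_nonneg_left hlength hμ0.le
        linarith
    _ ≤ 2 * (g N + g r) := by
        have := (hc N).1
        have := (hc r).1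
        linarith

end Growth

section GrowthRates

variable {b : ℕ → Fq[X]}

/-- The normalized size `|q_n| ^ (1 / n)` of the denominators of the convergents. -/
def qdenRoot (b : ℕ → Fq[X]) (n : ℕ) : ℝ := kabs Fq (polyToK Fq (qden Fq b n)) ^ (n : ℝ)⁻¹

lemma qdenRoot_eq_rpow (hb : ∀ n, 1 ≤ (b n).natDegree) (n : ℕ) :
    qdenRoot b n = qR Fq ^ (cfDeg b n / n : ℝ) := by
  rw [div_eq_mul_inv, Real.rpow_mul (qR_pos Fq).le, Real.rpow_natCast]
  exact congrArg (· ^ (n : ℝ)⁻¹) (kabs_cfDen_succ hb n)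

lemma eventually_qR_le_qdenRoot (hb : ∀ n, 1 ≤ (b n).natDegree) :
    ∀ᶠ n in atTop, qR Fq ≤ qdenRoot b n := by
  filter_upwards [eventually_gt_atTop 0] with n hn
  rw [qdenRoot_eq_rpow hb]
  refine Real.self_le_rpow_of_one_le (one_lt_qR Fq).le ?_
  rw [one_le_div (by exact_mod_cast hn)]
  exact_mod_cast (cfDeg_strictMono hb).le_apply

lemma qR_le_liminf_qdenRoot (hb : ∀ n, 1 ≤ (b n).natDegree)
    (hbdd : IsBoundedUnder (· ≤ ·) atTop (qdenRoot b)) : qR Fq ≤ liminf (qdenRoot b) atTop :=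
  le_liminf_of_le hbdd.isCoboundedUnder_ge (eventually_qR_le_qdenRoot hb)

lemma liminf_qdenRoot_le_limsup (hb : ∀ n, 1 ≤ (b n).natDegree)
    (hbdd : IsBoundedUnder (· ≤ ·) atTop (qdenRoot b)) :
    liminf (qdenRoot b) atTop ≤ limsup (qdenRoot b) atTop :=
  liminf_le_limsup hbdd ⟨_, eventually_qR_le_qdenRoot hb⟩

lemma hasLinearGrowth_cfDeg (hb : ∀ n, 1 ≤ (b n).natDegree)
    (hbdd : IsBoundedUnder (· ≤ ·) atTop (qdenRoot b)) :
    HasLinearGrowth (fun n => cfDeg b n) (Real.logb (qR Fq) (liminf (qdenRoot b) atTop))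
      (Real.logb (qR Fq) (limsup (qdenRoot b) atTop)) := by
  have hq := one_lt_qR Fq
  have hinf := (qR_pos Fq).trans_le (qR_le_liminf_qdenRoot hb hbdd)
  constructor
  · intro μ hμ
    rw [Real.lt_logb_iff_rpow_lt hq hinf] at hμ
    filter_upwards [eventually_lt_of_lt_liminf hμ ⟨_, eventually_qR_le_qdenRoot hb⟩,
      eventually_gt_atTop 0] with n hn hn0
    rw [qdenRoot_eq_rpow hb, Real.rpow_lt_rpow_left_iff hq,
      lt_div_iff₀ (by exact_mod_cast hn0)] at hn
    exact hn.le
  · intro ν hν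
    rw [gt_iff_lt, Real.logb_lt_iff_lt_rpow hq
      (hinf.trans_le (liminf_qdenRoot_le_limsup hb hbdd))] at hν
    filter_upwards [eventually_lt_of_limsup_lt hν hbdd, eventually_gt_atTop 0] with n hn hn0
    rw [qdenRoot_eq_rpow hb, Real.rpow_lt_rpow_left_iff hq,
      div_lt_iff₀ (by exact_mod_cast hn0)] at hn
    exact hn.le

end GrowthRates

/-! ### Exponents of approximation from repetitions -/

section Exponents

variable {b : ℕ → Fq[X]} {ξ : K Fq} {lo hi ρ w : ℝ}

variable (Fq) in
lemma exists_forall_qR_rpow_neg_lt {δ : ℝ} (hδ : 0 < δ) :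
    ∃ R : ℕ, ∀ y : ℝ, R ≤ y → qR Fq ^ (-y) < δ := by
  obtain ⟨R, hR⟩ := exists_pow_lt_of_lt_one hδ (inv_lt_one_of_one_lt₀ (one_lt_qR Fq))
  refine ⟨R, fun y hy => lt_of_le_of_lt ?_ hR⟩
  rw [inv_pow, ← Real.rpow_natCast, ← Real.rpow_neg (qR_pos Fq).le]
  exact Real.rpow_le_rpow_of_exponent_le (one_lt_qR Fq).le (neg_le_neg hy)

lemma qR_rpow_neg_le_Hpoly_cfQuadratic_rpow (hξ : IsCFOf Fq ξ (cfA Fq b)) {r u : ℕ} (hru : r < u)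
    {a y : ℝ} (ha : 0 ≤ a) (h : a * (cfDeg b r + cfDeg b u) ≤ y) :
    qR Fq ^ (-y) ≤ Hpoly Fq (cfQuadratic b r u) ^ (-a) := by
  have hH : 0 < Hpoly Fq (cfQuadratic b r u) :=
    one_pos.trans_le (one_le_Hpoly (cfQuadratic_ne_zero hξ hru))
  calc qR Fq ^ (-y) ≤ qR Fq ^ (((cfDeg b r + cfDeg b u : ℕ) : ℝ) * -a) := by
        refine Real.rpow_le_rpow_of_exponent_le (one_lt_qR Fq).le ?_
        push_cast
        linarith
    _ = (qR Fq ^ (cfDeg b r + cfDeg b u)) ^ (-a) := by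
        rw [Real.rpow_mul (qR_pos Fq).le, Real.rpow_natCast]
    _ ≤ _ := Real.rpow_le_rpow_of_nonpos hH (Hpoly_cfQuadratic_le hξ r u) (neg_nonpos.2 ha)

lemma coe_le_wStarExp_of_satisfiesCond {v : L Fq → ℝ} (hv : IsAbsExt Fq v)
    (hb : ¬ UltimatelyPeriodic b) (hξ : IsCFOf Fq ξ (cfA Fq b))
    (hg : HasLinearGrowth (fun n => cfDeg b n) lo hi) (hhi : 0 < hi) (hρ : 1 ≤ ρ)
    (h : SatisfiesCond b ρ) (hw : -1 ≤ w) (hwρ : w + 1 < lo / hi * ρ) :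
    (w : EReal) ≤ wStarExp Fq v 2 ξ := by
  refine coe_le_wStarExp hv hw fun δ hδ => ?_
  obtain ⟨R, hR⟩ := exists_forall_qR_rpow_neg_lt Fq hδ
  obtain ⟨R', hR'⟩ := hg.exists_mul_add_le_two_mul hhi (by linarith) (one_pos.trans_le hρ) hwρ
  obtain ⟨r, s, N, hrep, hrs, hN⟩ := h.exists_isRepetition hρ hb (max R R')
  have hlt : r < r + s := by have := hrep.period_pos; lia
  have hquot := hrep.kabs_evalK_div_le hξ
  refine ⟨cfQuadratic b r (r + s), natDegree_cfQuadratic_le _ _ _,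
    notRootOfDegreeLE_two hξ hb _ (cfQuadratic_ne_zero hξ hlt) (natDegree_cfQuadratic_le _ _ _),
    evalK_derivative_cfQuadratic_ne_zero hξ hlt, hquot.trans_lt (hR _ ?_), hquot.trans ?_⟩
  · have hRN : R ≤ N := (le_max_left R R').trans (hrs.trans hrep.add_le)
    have hNg : N ≤ cfDeg b N := (cfDeg_strictMono hξ.one_le_natDegree).le_apply
    exact_mod_cast (by lia : R ≤ 2 * cfDeg b N)
  · rw [show -w - 1 = -(w + 1) by ring]
    exact qR_rpow_neg_le_Hpoly_cfQuadratic_rpow hξ hlt (by linarith)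
      (hR' r s N ((le_max_right R R').trans hrs) hN)

lemma coe_le_wExp_of_satisfiesCond
    (hb : ¬ UltimatelyPeriodic b) (hξ : IsCFOf Fq ξ (cfA Fq b))
    (hg : HasLinearGrowth (fun n => cfDeg b n) lo hi) (hhi : 0 < hi) (hρ : 1 ≤ ρ)
    (h : SatisfiesCond b ρ) (hw : 0 ≤ w) (hwρ : w + 1 < lo / hi * (ρ + 1)) :
    (w : EReal) ≤ wExp Fq 2 ξ := by
  refine coe_le_wExp fun δ hδ => ?_
  obtain ⟨R, hR⟩ := exists_forall_qR_rpow_neg_lt Fq hδ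
  obtain ⟨R', hR'⟩ := hg.exists_mul_add_le_two_mul_add hhi (by linarith) hρ hwρ
  obtain ⟨r, s, N, hrep, hrs, hN⟩ := h.exists_isRepetition hρ hb (max R R')
  have hlt : r < r + s := by have := hrep.period_pos; lia
  have hvalue := hrep.kabs_evalK_cfQuadratic_le hξ
  refine ⟨cfQuadratic b r (r + s), natDegree_cfQuadratic_le _ _ _,
    notRootOfDegreeLE_two hξ hb _ (cfQuadratic_ne_zero hξ hlt) (natDegree_cfQuadratic_le _ _ _),
    hvalue.trans_lt (hR _ ?_), hvalue.trans ?_⟩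
  · have hmono := cfDeg_strictMono hξ.one_le_natDegree
    have hRN : R ≤ N := (le_max_left R R').trans (hrs.trans hrep.add_le)
    have hNg : (R : ℝ) ≤ cfDeg b N := mod_cast hRN.trans hmono.le_apply
    have hle : (cfDeg b (r + s) : ℝ) ≤ cfDeg b N := mod_cast hmono.monotone hrep.add_le
    linarith [(cfDeg b r).cast_nonneg (α := ℝ)]
  · refine qR_rpow_neg_le_Hpoly_cfQuadratic_rpow hξ hlt hw ?_
    have := hR' r s N ((le_max_right R R').trans hrs) hN
    linarith

end Exponents

section ConvergentExponents

lemma coe_le_of_forall_between {W : EReal} {c y : ℝ} (hc : (c : EReal) ≤ W)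
    (h : ∀ w : ℝ, c < w → w < y → (w : EReal) ≤ W) : (y : EReal) ≤ W := by
  refine le_of_forall_lt fun x hx => ?_
  by_cases hyc : y ≤ c
  · exact hx.trans_le ((EReal.coe_le_coe hyc).trans hc)
  obtain ⟨w, hw, hwy⟩ := EReal.lt_iff_exists_real_btwn.1
    (max_lt hx (EReal.coe_lt_coe (not_le.1 hyc)))
  rw [max_lt_iff, EReal.coe_lt_coe_iff] at hw
  exact hw.1.trans_le (h w hw.2 (EReal.coe_lt_coe_iff.1 hwy))

lemma coe_mul_add_sub_one_le_iff {κ : ℝ} (hκ : 0 < κ) (d : ℝ) (x W : EReal) :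
    (κ : EReal) * (x + d) - 1 ≤ W ↔ x ≤ (W + 1) / κ - d := by
  have hone : (1 : EReal) = ((1 : ℝ) : EReal) := rfl
  rw [EReal.le_sub_iff_add_le (.inl (EReal.coe_ne_bot d)) (.inl (EReal.coe_ne_top d)),
    EReal.le_div_iff_mul_le (by exact_mod_cast hκ) (EReal.coe_ne_top κ), hone,
    EReal.sub_le_iff_le_add (.inl (EReal.coe_ne_bot 1)) (.inl (EReal.coe_ne_top 1)), mul_comm]

lemma coe_mul_dioExp_add_sub_one_le {A : Type*} {b : ℕ → A} {W : EReal} {κ d : ℝ} (hκ : 0 < κ)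
    (h : ∀ ρ : ℝ, SatisfiesCond b ρ → ((κ * (ρ + d) - 1 : ℝ) : EReal) ≤ W) :
    (κ : EReal) * (dioExp b + d) - 1 ≤ W := by
  rw [coe_mul_add_sub_one_le_iff hκ]
  refine sSup_le ?_
  rintro _ ⟨ρ, rfl, hρ⟩
  rw [← coe_mul_add_sub_one_le_iff hκ]
  exact_mod_cast h ρ hρ

variable {b : ℕ → Fq[X]} {ξ : K Fq}

/-- The ratio `log m / log M`, where `m` and `M` are the lower and upper limits of
`|q_n| ^ (1 / n)`. -/
def growthRatio (b : ℕ → Fq[X]) : ℝ :=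
  Real.log (liminf (qdenRoot b) atTop) / Real.log (limsup (qdenRoot b) atTop)

lemma logb_limsup_qdenRoot_pos (hb : ∀ n, 1 ≤ (b n).natDegree)
    (hbdd : IsBoundedUnder (· ≤ ·) atTop (qdenRoot b)) :
    0 < Real.logb (qR Fq) (limsup (qdenRoot b) atTop) :=
  Real.logb_pos (one_lt_qR Fq) ((one_lt_qR Fq).trans_le
    ((qR_le_liminf_qdenRoot hb hbdd).trans (liminf_qdenRoot_le_limsup hb hbdd)))

variable (b) in
lemma logb_div_logb_eq_growthRatio :
    Real.logb (qR Fq) (liminf (qdenRoot b) atTop) / Real.logb (qR Fq) (limsup (qdenRoot b) atTop) =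
      growthRatio b :=
  div_div_div_cancel_right₀ (Real.log_pos (one_lt_qR Fq)).ne' _ _

lemma growthRatio_pos (hb : ∀ n, 1 ≤ (b n).natDegree)
    (hbdd : IsBoundedUnder (· ≤ ·) atTop (qdenRoot b)) : 0 < growthRatio b := by
  have hinf := (one_lt_qR Fq).trans_le (qR_le_liminf_qdenRoot hb hbdd)
  exact div_pos (Real.log_pos hinf)
    (Real.log_pos (hinf.trans_le (liminf_qdenRoot_le_limsup hb hbdd)))

lemma growthRatio_le_one (hb : ∀ n, 1 ≤ (b n).natDegree)
    (hbdd : IsBoundedUnder (· ≤ ·) atTop (qdenRoot b)) : growthRatio b ≤ 1 := by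
  have hinf := (one_lt_qR Fq).trans_le (qR_le_liminf_qdenRoot hb hbdd)
  have hle := liminf_qdenRoot_le_limsup hb hbdd
  exact div_le_one_of_le₀ (Real.log_le_log (one_pos.trans hinf) hle)
    (Real.log_pos (hinf.trans_le hle)).le

lemma growthRatio_eq_one_of_tendsto (hb : ∀ n, 1 ≤ (b n).natDegree) {l : ℝ}
    (h : Tendsto (qdenRoot b) atTop (nhds l)) : growthRatio b = 1 := by
  have hl : qR Fq ≤ l := ge_of_tendsto h (eventually_qR_le_qdenRoot hb)
  rw [growthRatio, h.liminf_eq, h.limsup_eq,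
    div_self (Real.log_pos ((one_lt_qR Fq).trans_le hl)).ne']

theorem growthRatio_mul_dioExp_sub_one_le_wStarExp {v : L Fq → ℝ} (hv : IsAbsExt Fq v)
    (hb : ¬ UltimatelyPeriodic b) (hξ : IsCFOf Fq ξ (cfA Fq b))
    (hbdd : IsBoundedUnder (· ≤ ·) atTop (qdenRoot b)) :
    (growthRatio b : EReal) * dioExp b - 1 ≤ wStarExp Fq v 2 ξ := by
  have hdeg := hξ.one_le_natDegree
  have hκ := growthRatio_pos hdeg hbdd
  have hκ_le := growthRatio_le_one hdeg hbdd
  have hcond (ρ : ℝ) (hρ : SatisfiesCond b ρ) :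
      ((growthRatio b * (ρ + 0) - 1 : ℝ) : EReal) ≤ wStarExp Fq v 2 ξ := by
    refine coe_le_of_forall_between (c := 2)
      (two_le_wStarExp hv hξ.kabs_le_one (notRootOfDegreeLE_two hξ hb)) fun w hw hwρ => ?_
    refine coe_le_wStarExp_of_satisfiesCond hv hb hξ (hasLinearGrowth_cfDeg hdeg hbdd)
      (logb_limsup_qdenRoot_pos hdeg hbdd) (by nlinarith) hρ (by linarith) ?_
    rw [logb_div_logb_eq_growthRatio]
    linarith
  simpa using coe_mul_dioExp_add_sub_one_le hκ hcond

theorem growthRatio_mul_dioExp_add_one_sub_one_le_wExp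
    (hb : ¬ UltimatelyPeriodic b) (hξ : IsCFOf Fq ξ (cfA Fq b))
    (hbdd : IsBoundedUnder (· ≤ ·) atTop (qdenRoot b)) :
    (growthRatio b : EReal) * (dioExp b + 1) - 1 ≤ wExp Fq 2 ξ := by
  have hdeg := hξ.one_le_natDegree
  have hκ := growthRatio_pos hdeg hbdd
  have hκ_le := growthRatio_le_one hdeg hbdd
  refine coe_mul_dioExp_add_sub_one_le (d := 1) hκ fun ρ hρ => ?_
  refine coe_le_of_forall_between (c := (2 : ℕ))
    (natCast_le_wExp one_le_two hξ.kabs_le_one (notRootOfDegreeLE_two hξ hb)) fun w hw hwρ => ?_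
  push_cast at hw
  refine coe_le_wExp_of_satisfiesCond hb hξ (hasLinearGrowth_cfDeg hdeg hbdd)
    (logb_limsup_qdenRoot_pos hdeg hbdd) (by nlinarith) hρ (by linarith) ?_
  rw [logb_div_logb_eq_growthRatio]
  linarith

end ConvergentExponents

theorem stmt4_general (Fq : Type) [Field Fq] [Fintype Fq]
    (v : L Fq → ℝ) (hv : IsAbsExt Fq v)
    (b : ℕ → Polynomial Fq)
    (hnup : ¬ UltimatelyPeriodic b)
    (ξ : K Fq) (hξ : IsCFOf Fq ξ (cfA Fq b))
    (hbdd : ∃ C : ℝ, ∀ n : ℕ, 1 ≤ n → kabs Fq (polyToK Fq (qden Fq b n)) ^ ((n : ℝ)⁻¹) ≤ C)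
    (m M : ℝ)
    (hm : m = Filter.liminf
      (fun n : ℕ => kabs Fq (polyToK Fq (qden Fq b n)) ^ ((n : ℝ)⁻¹)) Filter.atTop)
    (hM : M = Filter.limsup
      (fun n : ℕ => kabs Fq (polyToK Fq (qden Fq b n)) ^ ((n : ℝ)⁻¹)) Filter.atTop) :
    (wStarExp Fq v 2 ξ ≤ wExp Fq 2 ξ ∧
     (2 : EReal) ≤ wStarExp Fq v 2 ξ ∧
     ((Real.log m / Real.log M : ℝ) : EReal) * dioExp b - 1 ≤ wStarExp Fq v 2 ξ) ∧
    ((∃ l : ℝ, Filter.Tendsto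
        (fun n : ℕ => kabs Fq (polyToK Fq (qden Fq b n)) ^ ((n : ℝ)⁻¹))
        Filter.atTop (nhds l)) →
      dioExp b - 1 ≤ wStarExp Fq v 2 ξ) ∧
    ((2 : EReal) ≤ wExp Fq 2 ξ ∧
      ((Real.log m / Real.log M : ℝ) : EReal) * (dioExp b + 1) - 1 ≤ wExp Fq 2 ξ) ∧
    ((∃ l : ℝ, Filter.Tendsto
        (fun n : ℕ => kabs Fq (polyToK Fq (qden Fq b n)) ^ ((n : ℝ)⁻¹))
        Filter.atTop (nhds l)) →
      dioExp b ≤ wExp Fq 2 ξ) := by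
  subst hm hM
  have hdeg := hξ.one_le_natDegree
  have hbounded : IsBoundedUnder (· ≤ ·) atTop (qdenRoot b) :=
    hbdd.imp fun _ hC => eventually_map.2 (eventually_atTop.2 ⟨1, hC⟩)
  have hroot := notRootOfDegreeLE_two hξ hnup
  have htwo := two_le_wStarExp hv hξ.kabs_le_one hroot
  have hle := wStarExp_le_wExp hv hξ.kabs_le_one hroot
  have hstar := growthRatio_mul_dioExp_sub_one_le_wStarExp hv hnup hξ hbounded
  have hw := growthRatio_mul_dioExp_add_one_sub_one_le_wExp hnup hξ hbounded
  refine ⟨⟨hle, htwo, hstar⟩, fun ⟨l, hl⟩ => ?_, ⟨htwo.trans hle, hw⟩, fun ⟨l, hl⟩ => ?_⟩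
  · simpa [growthRatio_eq_one_of_tendsto hdeg hl] using hstar
  · rw [show dioExp b = dioExp b + 1 - 1 from (EReal.add_sub_cancel_right (b := 1)).symm]
    simpa [growthRatio_eq_one_of_tendsto hdeg hl] using hw

theorem stmt4 (Fq : Type) [Field Fq] [Fintype Fq]
    (v : L Fq → ℝ) (hv : IsAbsExt Fq v)
    (b : ℕ → Polynomial Fq) (hdeg : ∀ n, 1 ≤ (b n).natDegree)
    (hnup : ¬ UltimatelyPeriodic b)
    (ξ : K Fq) (hξ : IsCFOf Fq ξ (cfA Fq b))
    (hbdd : ∃ C : ℝ, ∀ n : ℕ, 1 ≤ n → kabs Fq (polyToK Fq (qden Fq b n)) ^ ((n : ℝ)⁻¹) ≤ C)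
    (m M : ℝ)
    (hm : m = Filter.liminf
      (fun n : ℕ => kabs Fq (polyToK Fq (qden Fq b n)) ^ ((n : ℝ)⁻¹)) Filter.atTop)
    (hM : M = Filter.limsup
      (fun n : ℕ => kabs Fq (polyToK Fq (qden Fq b n)) ^ ((n : ℝ)⁻¹)) Filter.atTop) :
    (wStarExp Fq v 2 ξ ≤ wExp Fq 2 ξ ∧
     (2 : EReal) ≤ wStarExp Fq v 2 ξ ∧
     ((Real.log m / Real.log M : ℝ) : EReal) * dioExp b - 1 ≤ wStarExp Fq v 2 ξ) ∧
    ((∃ l : ℝ, Filter.Tendsto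
        (fun n : ℕ => kabs Fq (polyToK Fq (qden Fq b n)) ^ ((n : ℝ)⁻¹))
        Filter.atTop (nhds l)) →
      dioExp b - 1 ≤ wStarExp Fq v 2 ξ) ∧
    ((∃ B : ℝ, ∀ n : ℕ, kabs Fq (polyToK Fq (b n)) ≤ B) →
      ((2 : EReal) ≤ wExp Fq 2 ξ ∧
       ((Real.log m / Real.log M : ℝ) : EReal) * (dioExp b + 1) - 1 ≤ wExp Fq 2 ξ) ∧
      ((∃ l : ℝ, Filter.Tendsto
          (fun n : ℕ => kabs Fq (polyToK Fq (qden Fq b n)) ^ ((n : ℝ)⁻¹))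
          Filter.atTop (nhds l)) →
        dioExp b ≤ wExp Fq 2 ξ)) := by
  obtain ⟨hstar, hstar_conv, hw⟩ := stmt4_general Fq v hv b hnup ξ hξ hbdd m M hm hM
  exact ⟨hstar, hstar_conv, fun _ => hw⟩

end Ooto
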